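/- arXiv:2407.16003 — 3 statements merged into one kernel-verified Lean document; each statement's English description precedes it below -/
import Mathlib

section
/- Let x be a natural number with 1 ≤ x ≤ 4, let n ≥ 3 + 2x, and let ρ : Fin r → Equiv.Perm (Fin n) be an sggi of rank r = n − x whose generated subgroup G is transitive. If G_j is intransitive for every j ∈ Fin r, then G = ⊤, i.e. G is the full symmetric group Equiv.Perm (Fin n). -/
/-- A string group generated by involutions (sggi): each generator has order 2 and
nonconsecutive generators commute. -/
def IsSggi {n r : ℕ} (ρ : Fin r → Equiv.Perm (Fin n)) : Prop :=
  (∀ i, orderOf (ρ i) = 2) ∧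
  ∀ i j : Fin r, 1 < |((i : ℕ) : ℤ) - ((j : ℕ) : ℤ)| → (ρ i * ρ j) ^ 2 = 1

section LabelOrbits

variable {ι α : Type*}

/-- The partition of `α` into orbits of the subgroup generated by the permutations with label
in `J`. -/
def labelOrbit (ρ : ι → Equiv.Perm α) (J : Set ι) : Setoid α :=
  MulAction.orbitRel (Subgroup.closure (ρ '' J)) α

variable {ρ : ι → Equiv.Perm α} {J K : Set ι}

theorem labelOrbit_iff {x y : α} :
    labelOrbit ρ J x y ↔ ∃ g ∈ Subgroup.closure (ρ '' J), g y = x := by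
  unfold labelOrbit
  rw [MulAction.orbitRel_apply, MulAction.mem_orbit_iff]
  constructor
  · rintro ⟨g, h⟩
    exact ⟨g, g.2, h⟩
  · rintro ⟨g, hg, h⟩
    exact ⟨⟨g, hg⟩, h⟩

theorem labelOrbit_apply {j : ι} (hj : j ∈ J) (x : α) : labelOrbit ρ J x (ρ j x) :=
  (labelOrbit ρ J).symm
    (labelOrbit_iff.2 ⟨ρ j, Subgroup.subset_closure (Set.mem_image_of_mem ρ hj), rfl⟩)

theorem labelOrbit_le_iff {T : Setoid α} :
    labelOrbit ρ J ≤ T ↔ ∀ j ∈ J, ∀ x, T x (ρ j x) := by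
  refine ⟨fun h j hj x => h (labelOrbit_apply hj x), fun h => ?_⟩
  have key : ∀ g ∈ Subgroup.closure (ρ '' J), ∀ x, T x (g x) := by
    intro g hg
    induction hg using Subgroup.closure_induction with
    | mem g hg => obtain ⟨j, hj, rfl⟩ := hg; exact h j hj
    | one => exact fun x => T.refl x
    | mul a b _ _ iha ihb => exact fun x => T.trans (ihb x) (iha (b x))
    | inv a _ ih => exact fun x => T.symm (by simpa using ih (a⁻¹ x))
  intro x y hxy
  obtain ⟨g, hg, rfl⟩ := labelOrbit_iff.1 hxy
  exact T.symm (key g hg y)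

theorem labelOrbit_mono (h : J ⊆ K) : labelOrbit ρ J ≤ labelOrbit ρ K :=
  labelOrbit_le_iff.2 fun _ hj => labelOrbit_apply (h hj)

theorem labelOrbit_eq_top_iff :
    labelOrbit ρ J = ⊤ ↔ MulAction.IsPretransitive (Subgroup.closure (ρ '' J)) α :=
  ⟨fun h => ⟨fun x y => by
    obtain ⟨g, hg, e⟩ := labelOrbit_iff.1 (show labelOrbit ρ J y x by rw [h]; trivial)
    exact ⟨⟨g, hg⟩, e⟩⟩, fun h => by
    refine Setoid.ext fun x y => ⟨fun _ => trivial, fun _ => ?_⟩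
    obtain ⟨g, hg⟩ := h.exists_smul_eq y x
    exact labelOrbit_iff.2 ⟨g, g.2, hg⟩⟩

theorem Setoid.card_quotient_le [Finite α] {a b : Setoid α} (h : a ≤ b) :
    Nat.card (Quotient b) ≤ Nat.card (Quotient a) :=
  Nat.card_le_card_of_surjective (Quotient.map' (s₁ := a) (s₂ := b) id fun _ _ => @h _ _)
    fun q => by
      induction q using Quotient.inductionOn with
      | h x => exact ⟨Quotient.mk _ x, rfl⟩

theorem Setoid.card_quotient_lt [Finite α] {a b : Setoid α} (h : a < b) :
    Nat.card (Quotient b) < Nat.card (Quotient a) := by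
  refine lt_of_le_of_ne (Setoid.card_quotient_le h.le) fun e => h.not_ge fun x y hxy => ?_
  have hs : Function.Surjective
      (Quotient.map' (s₁ := a) (s₂ := b) id fun _ _ hab => h.le hab) := fun q => by
    induction q using Quotient.inductionOn with
    | h x => exact ⟨Quotient.mk _ x, rfl⟩
  have hb := hs.bijective_of_nat_card_le e.ge
  exact Quotient.exact (hb.1 (a₁ := Quotient.mk a x) (a₂ := Quotient.mk a y)
    (Quotient.sound hxy))

theorem Setoid.one_le_card_quotient [Finite α] [Nonempty α] (a : Setoid α) :
    1 ≤ Nat.card (Quotient a) :=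
  Nat.card_pos_iff.2 ⟨(nonempty_quotient_iff a).2 ‹_›, inferInstance⟩

/-- Adding irredundant labels one at a time merges at least one pair of classes each time. -/
theorem card_quotient_sup_labelOrbit_add_card_le [Finite α] [DecidableEq ι] (e : Setoid α)
    (K : Finset ι) (h : ∀ k ∈ K, ∃ x, ¬ (e ⊔ labelOrbit ρ (K.erase k)) x (ρ k x)) :
    Nat.card (Quotient (e ⊔ labelOrbit ρ K)) + K.card ≤ Nat.card (Quotient e) := by
  induction K using Finset.induction_on with
  | empty =>
    rw [Finset.card_empty, add_zero]
    exact Setoid.card_quotient_le le_sup_left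
  | insert k K hk ih =>
    have hlt : e ⊔ labelOrbit ρ K < e ⊔ labelOrbit ρ (insert k K : Finset ι) := by
      refine lt_of_le_not_ge (sup_le_sup_left (labelOrbit_mono (by simp)) e) fun hle => ?_
      obtain ⟨x, hx⟩ := h k (Finset.mem_insert_self k K)
      rw [Finset.erase_insert hk] at hx
      exact hx (hle ((le_sup_right (a := e)) (labelOrbit_apply (by simp) x)))
    have h1 := Setoid.card_quotient_lt hlt
    have h2 := ih fun j hj => by
      obtain ⟨x, hx⟩ := h j (Finset.mem_insert_of_mem hj)
      refine ⟨x, fun hc => hx ?_⟩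
      exact sup_le_sup_left (labelOrbit_mono (Finset.coe_subset.2
        (Finset.erase_subset_erase j (Finset.subset_insert k K)))) e hc
    rw [Finset.card_insert_of_notMem hk]
    omega

theorem card_add_one_le_card_quotient_add_card [Finite α] [Nonempty α] [Fintype ι]
    [DecidableEq ι] (hess : ∀ k, ∃ x, ¬ labelOrbit ρ {k}ᶜ x (ρ k x)) (J : Finset ι) :
    Fintype.card ι + 1 ≤ Nat.card (Quotient (labelOrbit ρ J)) + J.card := by
  have h := card_quotient_sup_labelOrbit_add_card_le (ρ := ρ) (labelOrbit ρ J) Jᶜ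
    fun k hk => by
      obtain ⟨x, hx⟩ := hess k
      refine ⟨x, fun hc => hx (sup_le (labelOrbit_mono ?_) (labelOrbit_mono ?_) hc)⟩
      · rintro j hj rfl
        exact Finset.mem_compl.1 hk hj
      · simp
  have h1 := Setoid.one_le_card_quotient (labelOrbit ρ J ⊔ labelOrbit ρ (Jᶜ : Finset ι))
  have h2 := J.card_add_card_compl
  omega

theorem setoid_rel_iff_of_mem_closure {e : Setoid α} (hinv : ∀ k x, ρ k (ρ k x) = x)
    (he : ∀ k x y, e x y → e (ρ k x) (ρ k y)) {g : Equiv.Perm α}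
    (hg : g ∈ Subgroup.closure (ρ '' J)) : ∀ x y, e x y ↔ e (g x) (g y) := by
  induction hg using Subgroup.closure_induction with
  | mem g hg =>
    obtain ⟨j, -, rfl⟩ := hg
    exact fun x y => ⟨he j x y, fun h => by simpa [hinv] using he j _ _ h⟩
  | one => exact fun x y => Iff.rfl
  | mul a b _ _ iha ihb => exact fun x y => (ihb x y).trans (iha (b x) (b y))
  | inv a _ ih => exact fun x y => by simpa using (ih (a⁻¹ x) (a⁻¹ y)).symm

theorem mul_card_quotient_le_card [Finite α] (e : Setoid α) (m : ℕ)
    (h : ∀ x, m ≤ Nat.card {y // e y x}) : Nat.card (Quotient e) * m ≤ Nat.card α := by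
  classical
  have := Fintype.ofFinite α
  have := Fintype.ofFinite (Quotient e)
  rw [Nat.card_congr (Equiv.sigmaFiberEquiv (Quotient.mk e)).symm, Nat.card_sigma,
    Nat.card_eq_fintype_card, ← smul_eq_mul]
  refine Finset.card_nsmul_le_sum _ _ _ fun q _ => ?_
  induction q using Quotient.inductionOn with
  | h x =>
    refine (h x).trans (Nat.card_congr (Equiv.subtypeEquivRight fun y => ?_)).le
    exact Quotient.eq.symm

/-- If every label is irredundant and there are more than half as many labels as points, then
only the trivial partitions are invariant. -/
theorem eq_bot_or_eq_top_of_invariant [Finite α] [Fintype ι] (hinv : ∀ k x, ρ k (ρ k x) = x)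
    (htop : labelOrbit ρ Set.univ = ⊤) (hess : ∀ k, ∃ x, ¬ labelOrbit ρ {k}ᶜ x (ρ k x))
    (hcard : Nat.card α < 2 * Fintype.card ι) {e : Setoid α}
    (he : ∀ k x y, e x y → e (ρ k x) (ρ k y)) : e = ⊥ ∨ e = ⊤ := by
  classical
  by_contra! hne
  obtain ⟨hbot, hnetop⟩ := hne
  obtain ⟨x₀, x₁, hx, hx'⟩ : ∃ x y, e x y ∧ x ≠ y := by
    by_contra! hc
    exact hbot (le_bot_iff.1 fun x y h => hc x y h)
  have : Nonempty α := ⟨x₀⟩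
  obtain ⟨J, hJ, hmin⟩ := exists_minimal_of_wellFoundedLT
    (fun J : Finset ι => e ⊔ labelOrbit ρ J = ⊤)
    ⟨Finset.univ, by rw [Finset.coe_univ, htop, sup_top_eq]⟩
  have hk : J.card + 1 ≤ Nat.card (Quotient e) := by
    have h := card_quotient_sup_labelOrbit_add_card_le (ρ := ρ) e J fun k hk => by
      by_contra! hc
      have hle : (⊤ : Setoid α) ≤ e ⊔ labelOrbit ρ (J.erase k) := by
        rw [← hJ]
        refine sup_le le_sup_left (labelOrbit_le_iff.2 fun j hj x => ?_)
        rcases eq_or_ne j k with rfl | hjk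
        · exact hc x
        · exact (le_sup_right (a := e)) (labelOrbit_apply (Finset.mem_erase.2 ⟨hjk, hj⟩) x)
      exact Finset.notMem_erase k J (hmin (top_le_iff.1 hle) (Finset.erase_subset k J) hk)
    have := Setoid.one_le_card_quotient (e ⊔ labelOrbit ρ J)
    omega
  have hk2 : 2 ≤ Nat.card (Quotient e) := by
    have h1 := Setoid.card_quotient_lt (lt_top_iff_ne_top.2 hnetop)
    have := Setoid.one_le_card_quotient (⊤ : Setoid α)
    omega
  have hJB (x : α) : Nat.card (Quotient (labelOrbit ρ J)) ≤ Nat.card {y // e y x} := by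
    refine Nat.card_le_card_of_surjective (fun y => Quotient.mk _ y.1) fun q => ?_
    induction q using Quotient.inductionOn with
    | h c =>
      have hle : e ⊔ labelOrbit ρ J ≤
          Setoid.ker fun c => ∃ b, e b x ∧ labelOrbit ρ J b c := by
        refine sup_le (fun c d hcd => propext ?_) (fun c d hcd => propext ?_)
        · have key : ∀ c d, e c d → (∃ b, e b x ∧ labelOrbit ρ J b c) →
              ∃ b, e b x ∧ labelOrbit ρ J b d := by
            rintro c d hcd ⟨b, hb, hbc⟩
            obtain ⟨g, hg, rfl⟩ := labelOrbit_iff.1 hbc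
            exact ⟨g d, e.trans
              (e.symm ((setoid_rel_iff_of_mem_closure hinv he hg c d).1 hcd)) hb,
              labelOrbit_iff.2 ⟨g, hg, rfl⟩⟩
          exact ⟨key c d hcd, key d c (e.symm hcd)⟩
        · exact ⟨fun ⟨b, hb, h⟩ => ⟨b, hb, Setoid.trans' _ h hcd⟩,
            fun ⟨b, hb, h⟩ => ⟨b, hb, Setoid.trans' _ h (Setoid.symm' _ hcd)⟩⟩
      have hxc : (e ⊔ labelOrbit ρ J) x c := by rw [hJ]; trivial
      obtain ⟨b, hb, hbc⟩ := (hle hxc).mp ⟨x, e.refl x, Setoid.refl' _ x⟩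
      exact ⟨⟨b, hb⟩, Quotient.sound hbc⟩
  have hB2 (x : α) : 2 ≤ Nat.card {y // e y x} := by
    obtain ⟨g, hg, hgx⟩ := labelOrbit_iff.1
      (show labelOrbit ρ Set.univ x x₀ by rw [htop]; trivial)
    have hge := (setoid_rel_iff_of_mem_closure hinv he hg x₁ x₀).1 (e.symm hx)
    have : Nontrivial {y // e y x} := ⟨⟨x, e.refl x⟩, ⟨g x₁, hgx ▸ hge⟩, fun h => hx' <| by
      have := congrArg Subtype.val h
      exact g.injective (hgx.trans this)⟩
    exact Finite.one_lt_card
  have hB (x : α) : max 2 (Fintype.card ι + 1 - J.card) ≤ Nat.card {y // e y x} := by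
    have := card_add_one_le_card_quotient_add_card hess J
    have := hJB x
    have := hB2 x
    omega
  have hmul := mul_card_quotient_le_card e _ hB
  generalize hm : max 2 (Fintype.card ι + 1 - J.card) = m at hmul
  have hm2 : 2 ≤ m := by omega
  have hmJ : Fintype.card ι + 1 ≤ m + J.card := by omega
  obtain ⟨a, rfl⟩ := Nat.exists_eq_add_of_le hm2
  obtain ⟨b, hb⟩ := Nat.exists_eq_add_of_le hk2
  rw [hb] at hmul hk
  nlinarith

theorem isPreprimitive_closure_range [Finite α] [Fintype ι] (hinv : ∀ k x, ρ k (ρ k x) = x)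
    (htop : labelOrbit ρ Set.univ = ⊤) (hess : ∀ k, ∃ x, ¬ labelOrbit ρ {k}ᶜ x (ρ k x))
    (hcard : Nat.card α < 2 * Fintype.card ι) :
    MulAction.IsPreprimitive (Subgroup.closure (Set.range ρ)) α := by
  have hpre : MulAction.IsPretransitive (Subgroup.closure (Set.range ρ)) α := by
    rw [← Set.image_univ]
    exact labelOrbit_eq_top_iff.1 htop
  refine { hpre with isTrivialBlock_of_isBlock := fun {B} hB => ?_ }
  let e : Setoid α :=
    Setoid.ker fun c => {g : Subgroup.closure (Set.range ρ) | g • c ∈ B}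
  have he : ∀ k x y, e x y → e (ρ k x) (ρ k y) := by
    intro k x y hxy
    have hxy' : ∀ g : Subgroup.closure (Set.range ρ), g • x ∈ B ↔ g • y ∈ B :=
      fun g => Set.ext_iff.1 hxy g
    exact Set.ext fun g => hxy' (g * ⟨ρ k, Subgroup.subset_closure ⟨k, rfl⟩⟩)
  have hBe : ∀ x ∈ B, ∀ y ∈ B, e x y := by
    have key : ∀ g : Subgroup.closure (Set.range ρ), ∀ x ∈ B, ∀ y ∈ B, g • x ∈ B → g • y ∈ B :=
      fun g x hx y hy hgx => by
        rw [← MulAction.isBlock_iff_smul_eq_of_mem.1 hB hx hgx]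
        exact Set.smul_mem_smul_set hy
    exact fun x hx y hy => Set.ext fun g => ⟨key g x hx y hy, key g y hy x hx⟩
  rcases eq_bot_or_eq_top_of_invariant hinv htop hess hcard he with h | h
  · left
    intro x hx y hy
    have := hBe x hx y hy
    rw [h] at this
    exact this
  · rcases B.eq_empty_or_nonempty with rfl | ⟨x, hx⟩
    · exact Or.inl Set.subsingleton_empty
    · right
      refine Set.eq_univ_of_forall fun y => ?_
      have hxy : e x y := by rw [h]; trivial
      have := (Set.ext_iff.1 hxy 1).1
      simpa [hx] using this

theorem Setoid.rel_of_card_quotient_le_succ [Finite α] {a b : Setoid α} (hab : a ≤ b)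
    (hcard : Nat.card (Quotient a) ≤ Nat.card (Quotient b) + 1) {x y c d : α} (hxy : b x y)
    (hxy' : ¬ a x y) (hcd : b c d) (hcd' : ¬ a c d) :
    a c x ∧ a d y ∨ a c y ∧ a d x := by
  let a' : Setoid α :=
    { r := fun p q => a p q ∨ (a p x ∨ a p y) ∧ (a q x ∨ a q y)
      iseqv :=
        { refl := fun p => Or.inl (a.refl p)
          symm := fun h => h.imp a.symm And.symm
          trans := by
            rintro p q s (h₁ | h₁) (h₂ | h₂)
            · exact Or.inl (a.trans h₁ h₂)
            · exact Or.inr ⟨h₂.1.imp (a.trans h₁) (a.trans h₁), h₂.2⟩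
            · exact Or.inr ⟨h₁.1, h₁.2.imp (a.trans (a.symm h₂)) (a.trans (a.symm h₂))⟩
            · exact Or.inr ⟨h₁.1, h₂.2⟩ } }
  have hlt : a < a' := lt_of_le_not_ge (fun p q h => Or.inl h) fun h =>
    hxy' (h (Or.inr ⟨Or.inl (a.refl x), Or.inr (a.refl y)⟩))
  have hle : a' ≤ b := by
    have hx : ∀ p, a p x ∨ a p y → b p x := fun p h =>
      h.elim (fun h => hab h) fun h => b.trans (hab h) (b.symm hxy)
    rintro p q (h | h)
    · exact hab h
    · exact b.trans (hx p h.1) (b.symm (hx q h.2))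
  have heq : a' = b := by
    by_contra hne
    have := Setoid.card_quotient_lt (lt_of_le_of_ne hle hne)
    have := Setoid.card_quotient_lt hlt
    omega
  rw [← heq] at hcd
  rcases hcd with h | ⟨h₁ | h₁, h₂ | h₂⟩
  · exact absurd h hcd'
  · exact absurd (a.trans h₁ (a.symm h₂)) hcd'
  · exact Or.inl ⟨h₁, h₂⟩
  · exact Or.inr ⟨h₁, h₂⟩
  · exact absurd (a.trans h₁ (a.symm h₂)) hcd'

theorem eq_of_labelOrbit_of_forall_fixed {v w : α} (h : labelOrbit ρ J w v)
    (hw : ∀ j ∈ J, ρ j w = w) : v = w := by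
  have hle : labelOrbit ρ J ≤ Setoid.ker (· = w) :=
    labelOrbit_le_iff.2 fun j hj x => propext
      ⟨fun hx => by rw [hx, hw j hj], fun hx => (ρ j).injective (hx.trans (hw j hj).symm)⟩
  exact (hle h).mp rfl

theorem Commute.perm_apply {f g : Equiv.Perm α} (h : Commute f g) (x : α) :
    f (g x) = g (f x) :=
  Equiv.Perm.ext_iff.1 h.eq x

theorem labelOrbit_map_of_commute {h : ι} (hh : ∀ j ∈ J, Commute (ρ h) (ρ j)) {c d : α}
    (hcd : labelOrbit ρ J c d) : labelOrbit ρ J (ρ h c) (ρ h d) := by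
  have hle : labelOrbit ρ J ≤ (labelOrbit ρ J).comap (ρ h) :=
    labelOrbit_le_iff.2 fun j hj x => by
      rw [Setoid.comap_rel, (hh j hj).perm_apply]
      exact labelOrbit_apply hj _
  exact hle hcd

/-- A word in `J` with labels commuting with `h` uses `h` either an even or an odd number of
times. -/
theorem labelOrbit_compl_of_commute {h : ι} (hinv : ∀ x, ρ h (ρ h x) = x)
    (hh : ∀ j ∈ J, Commute (ρ h) (ρ j)) {c d : α} (hcd : labelOrbit ρ J c d)
    (hcd' : labelOrbit ρ {h}ᶜ c d) : labelOrbit ρ {h}ᶜ (ρ h c) (ρ h d) := by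
  set a := labelOrbit ρ {h}ᶜ with ha
  let T : Setoid α :=
    { r := fun p q => a p q ∧ a (ρ h p) (ρ h q) ∨ a p (ρ h q) ∧ a (ρ h p) q
      iseqv :=
        { refl := fun p => Or.inl ⟨a.refl _, a.refl _⟩
          symm := fun H => H.imp (fun H => ⟨a.symm H.1, a.symm H.2⟩)
            fun H => ⟨a.symm H.2, a.symm H.1⟩
          trans := by
            rintro p q s (⟨h₁, h₂⟩ | ⟨h₁, h₂⟩) (⟨h₃, h₄⟩ | ⟨h₃, h₄⟩)
            · exact Or.inl ⟨a.trans h₁ h₃, a.trans h₂ h₄⟩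
            · exact Or.inr ⟨a.trans h₁ h₃, a.trans h₂ h₄⟩
            · exact Or.inr ⟨a.trans h₁ h₄, a.trans h₂ h₃⟩
            · exact Or.inl ⟨a.trans h₁ h₄, a.trans h₂ h₃⟩ } }
  have hle : labelOrbit ρ J ≤ T := labelOrbit_le_iff.2 fun j hj x => by
    rcases eq_or_ne j h with rfl | hjh
    · exact Or.inr ⟨by rw [hinv], a.refl _⟩
    · refine Or.inl ⟨labelOrbit_apply hjh x, ?_⟩
      rw [(hh j hj).perm_apply]
      exact labelOrbit_apply hjh _
  rcases hle hcd with H | H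
  · exact H.2
  · exact a.trans H.2 (a.trans (a.symm hcd') H.1)

/-- If no generator is a transposition, then dropping a suitable label from `J` increases the
number of orbits by at least two. -/
theorem exists_card_quotient_erase_ge [Finite α] [DecidableEq ι]
    (hinv : ∀ k x, ρ k (ρ k x) = x) (htop : labelOrbit ρ Set.univ = ⊤)
    (hess : ∀ k, ∃ x, ¬ labelOrbit ρ {k}ᶜ x (ρ k x))
    (hprim : ∀ e : Setoid α, (∀ k x y, e x y → e (ρ k x) (ρ k y)) → e = ⊥ ∨ e = ⊤)
    (hns : ∀ l w, ρ l w ≠ w → ∃ z, ρ l z ≠ z ∧ z ≠ w ∧ z ≠ ρ l w)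
    {J : Finset ι} (hne : J.Nonempty) {k : ι} (hk : k ∉ J)
    (hpair : ∀ h, ∀ i ∈ J, ∀ j ∈ J, i ≠ j → Commute (ρ h) (ρ i) ∨ Commute (ρ h) (ρ j)) :
    ∃ l ∈ J, Nat.card (Quotient (labelOrbit ρ J)) + 2 ≤
      Nat.card (Quotient (labelOrbit ρ (J.erase l))) := by
  by_contra! hcrit
  have hsub (l : ι) : labelOrbit ρ (J.erase l) ≤ labelOrbit ρ J :=
    labelOrbit_mono (Finset.coe_subset.2 (Finset.erase_subset l J))
  have hsub' (l : ι) : labelOrbit ρ (J.erase l) ≤ labelOrbit ρ {l}ᶜ :=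
    labelOrbit_mono (by simp)
  have hcomm (h : ι) : ∃ l ∈ J, ∀ j ∈ J.erase l, Commute (ρ h) (ρ j) := by
    by_cases hall : ∀ j ∈ J, Commute (ρ h) (ρ j)
    · obtain ⟨l, hl⟩ := hne
      exact ⟨l, hl, fun j hj => hall j (Finset.mem_of_mem_erase hj)⟩
    · push Not at hall
      obtain ⟨l, hl, hlc⟩ := hall
      exact ⟨l, hl, fun j hj => (hpair h j (Finset.mem_of_mem_erase hj) l hl
        (Finset.ne_of_mem_erase hj)).resolve_right hlc⟩
  have hmerge {m : ι} (hm : m ∈ J) {x c d : α}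
      (hx : ¬ labelOrbit ρ (J.erase m) x (ρ m x)) (hcd : labelOrbit ρ J c d)
      (hcd' : ¬ labelOrbit ρ (J.erase m) c d) :
      labelOrbit ρ (J.erase m) c x ∧ labelOrbit ρ (J.erase m) d (ρ m x) ∨
        labelOrbit ρ (J.erase m) c (ρ m x) ∧ labelOrbit ρ (J.erase m) d x :=
    Setoid.rel_of_card_quotient_le_succ (hsub m) (by have := hcrit m hm; omega)
      (labelOrbit_apply hm x) hx hcd hcd'
  have hstrong {m : ι} (hm : m ∈ J) {c d : α} (hcd : labelOrbit ρ J c d)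
      (hcd' : labelOrbit ρ {m}ᶜ c d) : labelOrbit ρ (J.erase m) c d := by
    by_contra hc
    obtain ⟨x, hx⟩ := hess m
    rcases hmerge hm (fun h => hx (hsub' m h)) hcd hc with h | h
    · exact hx (Setoid.trans' _ (Setoid.symm' _ (hsub' m h.1))
        (Setoid.trans' _ hcd' (hsub' m h.2)))
    · exact hx (Setoid.trans' _ (Setoid.symm' _ (hsub' m h.2))
        (Setoid.trans' _ (Setoid.symm' _ hcd') (hsub' m h.1)))
  let e : Setoid α :=
    { r := fun p q => ∀ l ∈ J, labelOrbit ρ (J.erase l) p q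
      iseqv :=
        { refl := fun p l _ => Setoid.refl' _ p
          symm := fun h l hl => Setoid.symm' _ (h l hl)
          trans := fun h h' l hl => Setoid.trans' _ (h l hl) (h' l hl) } }
  have he : ∀ h c d, e c d → e (ρ h c) (ρ h d) := by
    intro h c d hcd l hl
    obtain ⟨l₀, hl₀, hc⟩ := hcomm h
    have hmap := labelOrbit_map_of_commute hc (hcd l₀ hl₀)
    refine hstrong hl (hsub l₀ hmap) ?_
    rcases eq_or_ne h l with rfl | hhl
    · exact labelOrbit_compl_of_commute (hinv h) hc (hcd l₀ hl₀) (hsub' h (hcd h hl))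
    · exact Setoid.trans' _ (Setoid.symm' _ (labelOrbit_apply hhl c))
        (Setoid.trans' _ (hsub' l (hcd l hl)) (labelOrbit_apply hhl d))
  obtain ⟨l, hl⟩ := hne
  obtain ⟨v, hv⟩ := hess l
  have hebot : e = ⊥ := (hprim e he).resolve_right fun h => by
    have hev : e v (ρ l v) := by rw [h]; trivial
    exact hv (hsub' l (hev l hl))
  have hedge {m : ι} (hm : m ∈ J) {p : α} (hp : ρ m p ≠ p) :
      ¬ labelOrbit ρ (J.erase m) p (ρ m p) := by
    intro hc
    have hep : e p (ρ m p) := fun j hj => by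
      rcases eq_or_ne m j with rfl | hmj
      · exact hc
      · exact labelOrbit_apply (Finset.mem_erase.2 ⟨hmj, hm⟩) p
    rw [hebot] at hep
    exact hp (Eq.symm hep)
  have hX : ∀ h w, labelOrbit ρ J v w → labelOrbit ρ J v (ρ h w) := by
    intro h w hw
    refine Setoid.trans' _ hw ?_
    have hmoved : ∃ m ∈ J, ρ m w ≠ w := by
      by_contra! hfix
      have := eq_of_labelOrbit_of_forall_fixed (Setoid.symm' _ hw) hfix
      subst this
      apply hv
      rw [hfix l hl]
    obtain ⟨l₀, hl₀, hc⟩ := hcomm h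
    by_cases hm : ∃ m ∈ J.erase l₀, ρ m w ≠ w
    · obtain ⟨m, hm, hmw⟩ := hm
      have hmJ := Finset.mem_of_mem_erase hm
      have hmhw : ρ m (ρ h w) ≠ ρ h w := by
        rw [← (hc m hm).perm_apply]
        exact fun H => hmw ((ρ h).injective H)
      rcases hmerge hmJ (hedge hmJ hmw) (labelOrbit_apply hmJ _) (hedge hmJ hmhw) with H | H
      · exact Setoid.symm' _ (hsub m H.1)
      · exact Setoid.trans' _ (labelOrbit_apply hmJ w) (Setoid.symm' _ (hsub m H.1))
    · push Not at hm
      obtain ⟨m, hmJ, hmw⟩ := hmoved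
      have hml : m = l₀ := by
        by_contra hml
        exact hmw (hm m (Finset.mem_erase.2 ⟨hml, hmJ⟩))
      subst hml
      obtain ⟨z, hz, hzw, hzmw⟩ := hns m w hmw
      rcases hmerge hmJ (hedge hmJ hz) (labelOrbit_apply hmJ w) (hedge hmJ hmw) with H | H
      · exact absurd (eq_of_labelOrbit_of_forall_fixed H.1 hm) hzw
      · have := eq_of_labelOrbit_of_forall_fixed H.1 hm
        exact absurd (by rw [← this, hinv]) hzmw
  have hall : ∀ y, labelOrbit ρ J v y := by
    have hle : labelOrbit ρ Set.univ ≤ Setoid.ker fun w => labelOrbit ρ J v w :=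
      labelOrbit_le_iff.2 fun h _ w =>
        propext ⟨hX h w, fun H => by simpa [hinv] using hX h _ H⟩
    intro y
    have hvy : labelOrbit ρ Set.univ v y := by rw [htop]; trivial
    exact (hle hvy).mp (Setoid.refl' _ v)
  obtain ⟨x, hx⟩ := hess k
  refine hx (labelOrbit_mono ?_ (Setoid.trans' _ (Setoid.symm' _ (hall x)) (hall (ρ k x))))
  rintro j hj rfl
  exact hk hj

theorem two_mul_card_add_card_quotient_le [Finite α] [DecidableEq ι]
    (hinv : ∀ k x, ρ k (ρ k x) = x) (htop : labelOrbit ρ Set.univ = ⊤)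
    (hess : ∀ k, ∃ x, ¬ labelOrbit ρ {k}ᶜ x (ρ k x))
    (hprim : ∀ e : Setoid α, (∀ k x y, e x y → e (ρ k x) (ρ k y)) → e = ⊥ ∨ e = ⊤)
    (hns : ∀ l w, ρ l w ≠ w → ∃ z, ρ l z ≠ z ∧ z ≠ w ∧ z ≠ ρ l w)
    {k : ι} (J : Finset ι) (hk : k ∉ J)
    (hpair : ∀ h, ∀ i ∈ J, ∀ j ∈ J, i ≠ j → Commute (ρ h) (ρ i) ∨ Commute (ρ h) (ρ j)) :
    2 * J.card + Nat.card (Quotient (labelOrbit ρ J)) ≤ Nat.card α := by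
  induction J using Finset.strongInduction with
  | H J ih =>
    rcases J.eq_empty_or_nonempty with rfl | hne
    · rw [Finset.card_empty, mul_zero, zero_add]
      exact Nat.card_le_card_of_surjective _ Quotient.mk_surjective
    · obtain ⟨l, hl, hcard⟩ :=
        exists_card_quotient_erase_ge hinv htop hess hprim hns hne hk hpair
      have := ih (J.erase l) (Finset.erase_ssubset hl)
        (fun h => hk (Finset.mem_of_mem_erase h))
        fun h i hi j hj => hpair h i (Finset.mem_of_mem_erase hi) j (Finset.mem_of_mem_erase hj)
      have := Finset.card_erase_add_one hl
      omega

end LabelOrbits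

theorem IsSggi.apply_apply {n r : ℕ} {ρ : Fin r → Equiv.Perm (Fin n)} (h : IsSggi ρ)
    (k : Fin r) (x : Fin n) : ρ k (ρ k x) = x := by
  have h2 := pow_orderOf_eq_one (ρ k)
  rw [h.1 k, pow_two] at h2
  exact Equiv.Perm.ext_iff.1 h2 x

theorem IsSggi.commute {n r : ℕ} {ρ : Fin r → Equiv.Perm (Fin n)} (h : IsSggi ρ)
    {i j : Fin r} (hij : (i : ℕ) ≠ j + 1) (hji : (j : ℕ) ≠ i + 1) : Commute (ρ i) (ρ j) := by
  rcases eq_or_ne i j with rfl | hne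
  · exact Commute.refl _
  · have hne' : (i : ℕ) ≠ j := fun H => hne (Fin.ext H)
    have hinv (k : Fin r) : (ρ k)⁻¹ = ρ k :=
      inv_eq_of_mul_eq_one_left (Equiv.Perm.ext (h.apply_apply k))
    have h2 := h.2 i j (by rw [lt_abs]; omega)
    rw [pow_two, mul_eq_one_iff_eq_inv, mul_inv_rev, hinv, hinv] at h2
    exact h2

theorem IsSggi.commute_or_commute {n r : ℕ} {ρ : Fin r → Equiv.Perm (Fin n)} (h : IsSggi ρ)
    (k : Fin r) {i j : Fin r} (hne : i ≠ j) (hij : (i : ℕ) ≠ j + 2) (hji : (j : ℕ) ≠ i + 2) :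
    Commute (ρ k) (ρ i) ∨ Commute (ρ k) (ρ j) := by
  have hne' : (i : ℕ) ≠ j := fun H => hne (Fin.ext H)
  by_cases hk : (k : ℕ) = i + 1 ∨ (i : ℕ) = k + 1
  · exact Or.inr (h.commute (by omega) (by omega))
  · exact Or.inl (h.commute (by omega) (by omega))

theorem Equiv.Perm.isSwap_of_involutive {α : Type*} [DecidableEq α] {f : Equiv.Perm α}
    (hf : ∀ x, f (f x) = x) {w : α} (hw : f w ≠ w)
    (h : ∀ z, f z ≠ z → z ≠ w → z = f w) : f.IsSwap := by
  refine ⟨w, f w, hw.symm, Equiv.Perm.ext fun z => ?_⟩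
  rcases eq_or_ne z w with rfl | hz
  · simp
  rcases eq_or_ne z (f w) with rfl | hz'
  · simp [hf]
  rw [Equiv.swap_apply_of_ne_of_ne hz hz']
  by_contra hc
  exact hz' (h z hc hz)

/-- There is a proper set of at least `x` labels, no two of which differ by exactly two. -/
theorem exists_labels_pairwise_ne_add_two {r x : ℕ} (hx4 : x ≤ 4) (hr : x + 3 ≤ r) :
    ∃ J : Finset (Fin r), x ≤ J.card ∧ (∃ k, k ∉ J) ∧
      ∀ i ∈ J, ∀ j ∈ J, (i : ℕ) ≠ j + 2 := by
  by_cases hx : x ≤ 2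
  · refine ⟨{⟨0, by omega⟩, ⟨1, by omega⟩}, ?_, ⟨⟨2, by omega⟩, ?_⟩, by simp⟩
    on_goal 2 => simp
    rw [Finset.card_pair (by simp)]
    exact hx
  · refine ⟨{⟨0, by omega⟩, ⟨1, by omega⟩, ⟨4, by omega⟩, ⟨5, by omega⟩}, ?_,
      ⟨⟨2, by omega⟩, ?_⟩, by simp⟩
    on_goal 2 => simp
    simpa [Finset.card_insert_of_notMem] using hx4

theorem stmt3 {n r x : ℕ} (hx1 : 1 ≤ x) (hx4 : x ≤ 4) (hn : 3 + 2 * x ≤ n)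
    (hr : r = n - x) (ρ : Fin r → Equiv.Perm (Fin n)) (hsggi : IsSggi ρ)
    (htrans : MulAction.IsPretransitive ↥(Subgroup.closure (Set.range ρ)) (Fin n))
    (hint : ∀ j : Fin r, ¬ MulAction.IsPretransitive
      ↥(Subgroup.closure (ρ '' {l | l ≠ j})) (Fin n)) :
    Subgroup.closure (Set.range ρ) = ⊤ := by
  have hinv := hsggi.apply_apply
  have htop : labelOrbit ρ Set.univ = ⊤ :=
    labelOrbit_eq_top_iff.2 (by rwa [Set.image_univ])
  have hess (k : Fin r) : ∃ y, ¬ labelOrbit ρ {k}ᶜ y (ρ k y) := by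
    by_contra! hc
    refine hint k (labelOrbit_eq_top_iff.1 (top_le_iff.1 (htop ▸ ?_)))
    refine labelOrbit_le_iff.2 fun j _ y => ?_
    rcases eq_or_ne j k with rfl | hjk
    · exact hc y
    · exact labelOrbit_apply hjk y
  have hcard : Nat.card (Fin n) < 2 * Fintype.card (Fin r) := by
    rw [Nat.card_fin, Fintype.card_fin]
    omega
  by_cases hswap : ∃ l, (ρ l).IsSwap
  · obtain ⟨l, hl⟩ := hswap
    exact Equiv.Perm.subgroup_eq_top_of_isPreprimitive_of_isSwap_mem
      (isPreprimitive_closure_range hinv htop hess hcard) (ρ l) hl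
      (Subgroup.subset_closure ⟨l, rfl⟩)
  exfalso
  have hns : ∀ l w, ρ l w ≠ w → ∃ z, ρ l z ≠ z ∧ z ≠ w ∧ z ≠ ρ l w := by
    intro l w hw
    by_contra! hc
    exact hswap ⟨l, Equiv.Perm.isSwap_of_involutive (hinv l) hw hc⟩
  obtain ⟨J, hJ, ⟨k, hk⟩, hJ2⟩ := exists_labels_pairwise_ne_add_two hx4 (by omega : x + 3 ≤ r)
  have hupper := two_mul_card_add_card_quotient_le hinv htop hess
    (fun e he => eq_bot_or_eq_top_of_invariant hinv htop hess hcard he) hns J hk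
    fun h i hi j hj hij => hsggi.commute_or_commute h hij (hJ2 i hi j hj) (hJ2 j hj i hi)
  have : Nonempty (Fin n) := ⟨⟨0, by omega⟩⟩
  have hlower := card_add_one_le_card_quotient_add_card hess J
  rw [Nat.card_fin] at hupper
  rw [Fintype.card_fin] at hlower
  omega
end

section
/- Let n ≥ 7. There exists exactly one faithful transitive permutation representation of the symmetric group of degree n on 2n points; equivalently: there exists a subgroup H of Equiv.Perm (Fin n) with Subgroup.index H = 2 * n and Subgroup.normalCore H = ⊥, and for any two subgroups H, K of Equiv.Perm (Fin n) with index 2n and trivial normal core there exists g ∈ Equiv.Perm (Fin n) such that K = Subgroup.map (MulAut.conj g).toMonoidHom H. -/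
open Equiv Equiv.Perm MulAction
open scoped Pointwise Nat

section Arithmetic

theorem Nat.le_choose_of_pos_of_lt {N k : ℕ} (hk : 0 < k) (hkN : k < N) : N ≤ N.choose k := by
  induction N generalizing k with
  | zero => omega
  | succ N ih =>
    obtain ⟨j, rfl⟩ : ∃ j, k = j + 1 := ⟨k - 1, by omega⟩
    rw [Nat.choose_succ_succ]
    rcases Nat.lt_or_ge (j + 1) N with h | h
    · have := ih (Nat.succ_pos j) h
      have : 0 < N.choose j := Nat.choose_pos (by omega)
      omega
    · obtain rfl : N = j + 1 := by omega
      simp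

theorem Nat.choose_two_le_choose {N k : ℕ} (hk : 2 ≤ k) (hkN : k + 2 ≤ N) :
    N.choose 2 ≤ N.choose k := by
  induction N generalizing k with
  | zero => omega
  | succ N ih =>
    obtain ⟨j, rfl⟩ : ∃ j, k = j + 1 := ⟨k - 1, by omega⟩
    rcases Nat.lt_or_ge (j + 2) N with h | h
    · rw [Nat.choose_succ_succ N j, Nat.choose_succ_succ N 1, Nat.choose_one_right]
      exact Nat.add_le_add (Nat.le_choose_of_pos_of_lt (by omega) (by omega)) (ih hk (by omega))
    · obtain rfl : N = j + 2 := by omega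
      rw [Nat.choose_symm_of_eq_add (by omega : j + 2 + 1 = 2 + (j + 1))]

theorem Nat.four_mul_lt_factorial {m : ℕ} (hm : 4 ≤ m) : 4 * m < m ! := by
  induction m, hm using Nat.le_induction with
  | base => decide
  | succ m hm ih =>
    rw [Nat.factorial_succ]
    nlinarith

end Arithmetic

section Orbits

theorem MulAction.ncard_orbit_le_index_mul_ncard_orbit {G X : Type*} [Group G] [Finite G]
    [MulAction G X] (H : Subgroup G) (x : X) :
    (orbit G x).ncard ≤ H.index * (orbit H x).ncard := by
  have key : (stabilizer G x).subgroupOf H = stabilizer H x := rfl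
  rw [← index_stabilizer, ← index_stabilizer, ← key, mul_comm]
  change _ ≤ (stabilizer G x).relIndex H * _
  rw [← Subgroup.inf_relIndex_right, Subgroup.relIndex_mul_index inf_le_right]
  exact Nat.le_of_dvd (Nat.pos_of_ne_zero Subgroup.index_ne_zero_of_finite)
    (Subgroup.index_dvd_of_le inf_le_left)

theorem Equiv.Perm.ncard_orbit_set {α : Type*} [Finite α] (s : Set α) :
    (orbit (Perm α) s).ncard = (Nat.card α).choose s.ncard := by
  classical
  obtain ⟨t, rfl⟩ := s.toFinite.exists_finset_coe
  have := Set.powersetCard.isPretransitive (α := α) (n := t.card)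
  have h := Set.powersetCard.stabilizer_coe (G := Perm α) (Set.powersetCard.ofCard (s := t) rfl)
  rw [Set.ncard_coe_finset, ← Set.powersetCard.card, ← index_stabilizer_of_transitive (Perm α)
    (Set.powersetCard.ofCard (s := t) rfl), h, index_stabilizer]
  rfl

end Orbits

section ThreeCycles

variable {α : Type*} [Fintype α] [DecidableEq α]

theorem Equiv.Perm.isThreeCycle_commutator {g h : Perm α} {a : α} (hg : g a ≠ a)
    (hh : h a ≠ a) (hgh : ∀ x, g x ≠ x → h x ≠ x → x = a) :
    IsThreeCycle (g * h * g⁻¹ * h⁻¹) := by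
  have g_fix : ∀ x, h x ≠ x → x ≠ a → g x = x := fun x hx hxa ↦
    by_contra fun h' ↦ hxa (hgh x h' hx)
  have h_fix : ∀ x, g x ≠ x → x ≠ a → h x = x := fun x hx hxa ↦
    by_contra fun h' ↦ hxa (hgh x hx h')
  have g_inj : ∀ x y, g x = g y → x = y := fun x y e ↦ g.injective e
  have h_inj : ∀ x y, h x = h y → x = y := fun x y e ↦ h.injective e
  have hga : h (g a) = g a := h_fix _ (fun e ↦ hg (g.injective e)) hg
  have gha : g (h a) = h a := g_fix _ (fun e ↦ hh (h.injective e)) hh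
  have hne : h a ≠ g a := fun e ↦ hh (g_inj _ _ (gha.trans e))
  suffices g * h * g⁻¹ * h⁻¹ = swap a (h a) * swap a (g a) by
    rw [this]
    exact isThreeCycle_swap_mul_swap_same hh.symm hg.symm hne
  rw [mul_inv_eq_iff_eq_mul, mul_inv_eq_iff_eq_mul]
  ext y
  simp only [Perm.mul_apply]
  by_cases hya : y = a
  · subst hya
    rw [gha, hga, swap_apply_right, swap_apply_left]
  by_cases hgy : g y = y
  · rw [hgy]
    by_cases hhy : h y = y
    · rw [hhy, hgy, swap_apply_of_ne_of_ne hya (by grind), swap_apply_of_ne_of_ne hya (by grind)]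
    · by_cases hhya : h y = a
      · rw [hhya, swap_apply_left, swap_apply_of_ne_of_ne hg hne.symm]
      · rw [g_fix (h y) (fun e ↦ hhy (h_inj _ _ e)) hhya,
          swap_apply_of_ne_of_ne hhya (by grind), swap_apply_of_ne_of_ne hhya (by grind)]
  · rw [h_fix y hgy hya]
    by_cases hgya : g y = a
    · rw [hgya, swap_apply_of_ne_of_ne hh hne, swap_apply_right]
    · rw [h_fix (g y) (fun e ↦ hgy (g_inj _ _ e)) hgya,
        swap_apply_of_ne_of_ne hgya (by grind), swap_apply_of_ne_of_ne hgya (by grind)]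

/-- A weak form of Bochert's bound, valid without any transitivity assumption. -/
theorem Subgroup.exists_factorial_le_index_of_forall_not_isThreeCycle {H : Subgroup (Perm α)}
    (hH : ∀ g ∈ H, ¬ IsThreeCycle g) :
    ∃ m, Fintype.card α ≤ 2 * m ∧ m ! ≤ H.index := by
  let IsBase (s : Finset α) : Prop := ∀ h ∈ H, (∀ x ∈ s, h x = x) → h = 1
  obtain ⟨s, hs, hmin⟩ : ∃ s, IsBase s ∧ ∀ t, IsBase t → s.card ≤ t.card := by
    have hne : ∃ k, ∃ s, IsBase s ∧ s.card = k :=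
      ⟨_, Finset.univ, fun h _ hx ↦ Equiv.ext fun x ↦ hx x (Finset.mem_univ x), rfl⟩
    classical
    obtain ⟨s, hs, hk⟩ := Nat.find_spec hne
    exact ⟨s, hs, fun t ht ↦ hk ▸ Nat.find_min' hne ⟨t, ht, rfl⟩⟩
  have exists_of_card_lt : ∀ t : Finset α, t.card < s.card →
      ∃ h ∈ H, (∀ x ∈ t, h x = x) ∧ h ≠ 1 := by
    intro t ht
    by_contra! hcon
    exact absurd (hmin t hcon) (by omega)
  refine ⟨Fintype.card α - s.card, ?_, ?_⟩
  · by_contra! hlt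
    have hsα := s.card_le_univ
    obtain ⟨g, hgH, hg, hg1⟩ := exists_of_card_lt sᶜ (by rw [Finset.card_compl]; omega)
    obtain ⟨a, ha⟩ : ∃ a, g a ≠ a := by
      by_contra! hcon
      exact hg1 (Equiv.ext hcon)
    have has : a ∈ s := by
      by_contra hcon
      exact ha (hg a (Finset.mem_compl.mpr hcon))
    obtain ⟨h, hhH, hh, hh1⟩ := exists_of_card_lt (s.erase a) (Finset.card_erase_lt_of_mem has)
    have hha : h a ≠ a := fun hcon ↦ hh1 <| hs h hhH fun x hx ↦ by
      by_cases hxa : x = a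
      · rw [hxa, hcon]
      · exact hh x (Finset.mem_erase.mpr ⟨hxa, hx⟩)
    refine hH _ (H.mul_mem (H.mul_mem (H.mul_mem hgH hhH) (H.inv_mem hgH)) (H.inv_mem hhH))
      (isThreeCycle_commutator ha hha fun x hgx hhx ↦ ?_)
    by_contra hxa
    have hxs : x ∉ s := fun hxs ↦ hhx (hh x (Finset.mem_erase.mpr ⟨hxa, hxs⟩))
    exact hgx (hg x (Finset.mem_compl.mpr hxs))
  · let f : Perm {x // x ∉ s} →* Perm α := ofSubtype
    have hcard : Nat.card f.range = (Fintype.card α - s.card)! := by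
      rw [← Nat.card_congr (MonoidHom.ofInjective (f := f) ofSubtype_injective).toEquiv,
        Nat.card_perm, Nat.card_eq_fintype_card, Fintype.card_subtype_compl, Fintype.card_coe]
    have hinf : H ⊓ f.range = ⊥ := by
      rw [eq_bot_iff]
      rintro _ ⟨hH', u, rfl⟩
      exact hs _ hH' fun x hx ↦ ofSubtype_apply_of_not_mem u (not_not.mpr hx)
    rw [← hcard, ← Subgroup.relIndex_bot_left, ← hinf, Subgroup.inf_relIndex_right,
      ← Subgroup.relIndex_top_right]
    exact Subgroup.relIndex_le_of_le_right le_top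
      (by rw [Subgroup.relIndex_top_right]; exact Subgroup.index_ne_zero_of_finite)

theorem Equiv.Perm.IsThreeCycle.ncard_ne_two_of_isBlock {G : Subgroup (Perm α)} {c : Perm α}
    (hc : IsThreeCycle c) (hcG : c ∈ G) {B : Set α} (hB : IsBlock G B) {x : α} (hx : x ∈ B)
    (hcx : c x ≠ x) : B.ncard ≠ 2 := by
  intro hB2
  have hc3 : ∀ y, c (c (c y)) = y := fun y ↦ by
    have := pow_orderOf_eq_one c
    rw [hc.orderOf] at this
    exact congrArg (· y) this
  have hinj : ∀ y z, c y = c z → y = z := fun y z e ↦ c.injective e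
  rcases hB.smul_eq_or_disjoint ⟨c, hcG⟩ with h | h
  · have hmem : ∀ y ∈ B, c y ∈ B := fun y hy ↦ h ▸ Set.smul_mem_smul_set (a := (⟨c, hcG⟩ : G)) hy
    obtain ⟨u, v, huv, rfl⟩ := Set.ncard_eq_two.mp hB2
    have hu := hmem u (by simp)
    have hv := hmem v (by simp)
    simp only [Set.mem_insert_iff, Set.mem_singleton_iff] at hu hv hx
    grind
  · have hdisj : ∀ y ∈ B, c y ∉ B := fun y hy hcy ↦
      Set.disjoint_left.mp h (Set.smul_mem_smul_set (a := (⟨c, hcG⟩ : G)) hy) hcy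
    have hsub : B ∪ (⟨c, hcG⟩ : G) • B ⊆ (c.support : Set α) := by
      rintro y (hy | ⟨y, hy, rfl⟩)
      · exact mem_support.mpr fun e ↦ hdisj y hy (e.symm ▸ hy)
      · exact mem_support.mpr fun e ↦ hdisj y hy (by rwa [show c y = y from hinj _ _ e])
    have := Set.ncard_le_ncard hsub (Set.toFinite _)
    rw [Set.ncard_union_eq h.symm, Set.ncard_smul_set, Set.ncard_coe_finset, hc.card_support,
      hB2] at this
    omega

end ThreeCycles

section SmallIndex

variable {α : Type*} [Fintype α] [DecidableEq α] {H : Subgroup (Perm α)}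

theorem Subgroup.exists_isThreeCycle_mem_of_index_le (hα : 7 ≤ Fintype.card α)
    (hH : H.index ≤ 2 * Fintype.card α) : ∃ g ∈ H, IsThreeCycle g := by
  by_contra! hcon
  obtain ⟨m, hm, hmi⟩ := exists_factorial_le_index_of_forall_not_isThreeCycle hcon
  have := Nat.four_mul_lt_factorial (show 4 ≤ m by omega)
  omega

theorem Subgroup.isPreprimitive_of_isPretransitive_of_index_le (hα : 7 ≤ Fintype.card α)
    (hH : H.index ≤ 2 * Fintype.card α) [IsPretransitive H α] : IsPreprimitive H α := by
  refine ⟨fun {B} hB ↦ ?_⟩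
  by_contra hcon
  simp only [IsTrivialBlock, not_or, Set.not_subsingleton_iff] at hcon
  obtain ⟨hBn, hBu⟩ := hcon
  have hmul := hB.ncard_block_mul_ncard_orbit_eq hBn.nonempty
  have hle := ncard_orbit_le_index_mul_ncard_orbit H B
  rw [Equiv.Perm.ncard_orbit_set] at hle
  rw [Nat.card_eq_fintype_card] at hmul hle
  have hB1 : 1 < B.ncard := Set.one_lt_ncard_iff_nontrivial.mpr hBn
  have hB2 : B.ncard ≠ 2 := by
    obtain ⟨c, hcH, hc⟩ := exists_isThreeCycle_mem_of_index_le hα hH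
    obtain ⟨x, hx⟩ : ∃ x, c x ≠ x := by
      by_contra! hcon
      exact hc.ne_one (Equiv.ext hcon)
    obtain ⟨y, hy⟩ := hBn.nonempty
    obtain ⟨g, rfl⟩ := MulAction.exists_smul_eq H y x
    rw [← Set.ncard_smul_set g B]
    exact hc.ncard_ne_two_of_isBlock hcH (hB.translate g) (Set.smul_mem_smul_set hy) hx
  have hBlt : B.ncard < Fintype.card α := by
    rw [← Nat.card_eq_fintype_card]
    exact Set.ncard_lt_card hBu
  generalize Fintype.card α = n at *
  generalize B.ncard = a at *
  generalize (orbit H B).ncard = b at *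
  obtain ⟨a, rfl⟩ : ∃ a', a = a' + 1 := ⟨a - 1, by omega⟩
  obtain ⟨n, rfl⟩ : ∃ n', n = n' + 1 := ⟨n - 1, by omega⟩
  have hb : 2 ≤ b := by
    by_contra! hb
    interval_cases b <;> omega
  have h2a : 2 * (a + 1) ≤ n + 1 := by nlinarith
  have habsorb := Nat.add_one_mul_choose_eq n a
  have hchoose := Nat.choose_two_le_choose (show 2 ≤ a by omega) (show a + 2 ≤ n by omega)
  have htwo : n.choose 2 * 2 = n * (n - 1) := by
    rw [Nat.choose_two_right, Nat.div_mul_cancel (Nat.even_mul_pred_self n).two_dvd]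
  obtain ⟨n, rfl⟩ : ∃ n', n = n' + 1 := ⟨n - 1, by omega⟩
  rw [Nat.add_sub_cancel] at htwo
  have hbound : (n + 1 + 1) * (n + 1).choose a ≤ (n + 1 + 1) * (2 * (n + 1 + 1)) := by
    calc (n + 1 + 1) * (n + 1).choose a
        = (n + 1 + 1).choose (a + 1) * (a + 1) := habsorb
      _ ≤ H.index * b * (a + 1) := Nat.mul_le_mul_right _ hle
      _ = H.index * ((a + 1) * b) := by ring
      _ ≤ (n + 1 + 1) * (2 * (n + 1 + 1)) := by
        rw [hmul, mul_comm]
        exact Nat.mul_le_mul_left _ hH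
  have := Nat.le_of_mul_le_mul_left hbound (by omega)
  nlinarith

theorem Subgroup.not_isPretransitive_of_index_le (hα : 7 ≤ Fintype.card α)
    (hH : H.index ≤ 2 * Fintype.card α) (hH2 : 2 < H.index) : ¬ IsPretransitive H α := by
  intro _
  have hprim := isPreprimitive_of_isPretransitive_of_index_le hα hH
  obtain ⟨c, hcH, hc⟩ := exists_isThreeCycle_mem_of_index_le hα hH
  have hle := alternatingGroup_le_of_isPreprimitive_of_isThreeCycle_mem hprim hc hcH
  have : Nontrivial α := Fintype.one_lt_card_iff_nontrivial.mp (by omega)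
  have hdvd := Subgroup.index_dvd_of_le hle
  rw [alternatingGroup.index_eq_two] at hdvd
  exact absurd (Nat.le_of_dvd two_pos hdvd) (by omega)

theorem Subgroup.exists_le_stabilizer_of_index_le (hα : 7 ≤ Fintype.card α)
    (hH : H.index ≤ 2 * Fintype.card α) (hH2 : 2 < H.index) :
    ∃ x : α, H ≤ stabilizer (Perm α) x := by
  by_contra! hcon
  have hnt : ∀ x : α, 2 ≤ (orbit H x).ncard := by
    intro x
    obtain ⟨g, hgH, hg⟩ := SetLike.not_le_iff_exists.mp (hcon x)
    exact (Set.one_lt_ncard).mpr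
      ⟨g x, ⟨⟨g, hgH⟩, rfl⟩, x, mem_orbit_self x, hg⟩
  refine not_isPretransitive_of_index_le hα hH hH2 ⟨fun x y ↦ ?_⟩
  by_contra hxy
  have hdisj : Disjoint (orbit H x) (orbit H y) :=
    (orbit.eq_or_disjoint x y).resolve_left fun e ↦
      hxy (show y ∈ orbit H x from e ▸ mem_orbit_self y)
  have hsum := Set.ncard_le_card (orbit H x ∪ orbit H y)
  rw [Set.ncard_union_eq hdisj, Nat.card_eq_fintype_card] at hsum
  have hle := ncard_orbit_le_index_mul_ncard_orbit H (orbit H x)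
  have hone : orbit H (orbit H x) = {orbit H x} := by
    ext s
    simp [mem_orbit_iff, eq_comm]
  rw [hone, Set.ncard_singleton, mul_one, Equiv.Perm.ncard_orbit_set,
    Nat.card_eq_fintype_card] at hle
  have hchoose := Nat.choose_two_le_choose (hnt x)
    (show (orbit H x).ncard + 2 ≤ Fintype.card α by have := hnt y; omega)
  have htwo : (Fintype.card α).choose 2 * 2 = Fintype.card α * (Fintype.card α - 1) := by
    rw [Nat.choose_two_right, Nat.div_mul_cancel (Nat.even_mul_pred_self _).two_dvd]
  have : Fintype.card α * 6 ≤ Fintype.card α * (Fintype.card α - 1) :=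
    Nat.mul_le_mul_left _ (by omega)
  omega

end SmallIndex

section AlternatingStabilizer

variable {α : Type*} [Fintype α] [DecidableEq α]

theorem alternatingGroup.index_inf_stabilizer (hα : 3 ≤ Fintype.card α) (x : α) :
    (alternatingGroup α ⊓ stabilizer (Perm α) x).index = 2 * Fintype.card α := by
  have : Nontrivial α := Fintype.one_lt_card_iff_nontrivial.mp (by omega)
  have hrel : (alternatingGroup α).relIndex (stabilizer (Perm α) x) = 2 := by
    have hdvd : (alternatingGroup α).relIndex (stabilizer (Perm α) x) ∣ 2 :=
      alternatingGroup.index_eq_two (α := α) ▸ Subgroup.relIndex_dvd_index_of_normal _ _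
    refine ((Nat.dvd_prime Nat.prime_two).mp hdvd).resolve_left fun h1 ↦ ?_
    obtain ⟨y, hy, z, hz, hyz⟩ := Finset.one_lt_card.mp
      (show 1 < (Finset.univ.erase x).card by
        rw [Finset.card_erase_of_mem (Finset.mem_univ x), Finset.card_univ]; omega)
    have hmem : swap y z ∈ stabilizer (Perm α) x :=
      swap_apply_of_ne_of_ne (Finset.ne_of_mem_erase hy).symm (Finset.ne_of_mem_erase hz).symm
    have := Subgroup.relIndex_eq_one.mp h1 hmem
    rw [mem_alternatingGroup, sign_swap hyz] at this
    exact absurd this (by decide)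
  rw [← Subgroup.relIndex_mul_index inf_le_right, Subgroup.inf_relIndex_right, hrel,
    index_stabilizer_of_transitive, Nat.card_eq_fintype_card]

theorem alternatingGroup.normalCore_inf_stabilizer (x : α) :
    (alternatingGroup α ⊓ stabilizer (Perm α) x).normalCore = ⊥ := by
  rw [eq_bot_iff]
  intro σ hσ
  refine Equiv.ext fun y ↦ ?_
  have h : (swap x y * σ * (swap x y)⁻¹) x = x := (hσ (swap x y)).2
  rw [Perm.mul_apply, Perm.mul_apply, swap_inv, swap_apply_left] at h
  exact (swap x y).injective (h.trans (swap_apply_right x y).symm)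

theorem alternatingGroup.map_conj_inf_stabilizer (g : Perm α) (x : α) :
    (alternatingGroup α ⊓ stabilizer (Perm α) x).map (MulAut.conj g).toMonoidHom =
      alternatingGroup α ⊓ stabilizer (Perm α) (g x) := by
  ext σ
  rw [Subgroup.mem_map_equiv]
  simp only [Subgroup.mem_inf, mem_alternatingGroup, mem_stabilizer_iff, MulAut.conj_symm_apply,
    Perm.smul_def, Perm.mul_apply, Perm.inv_eq_iff_eq]
  simp [mul_right_comm _ (sign σ)]

theorem Subgroup.eq_inf_stabilizer_of_index_eq (hα : 3 ≤ Fintype.card α) {H : Subgroup (Perm α)}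
    {x : α} (hHx : H ≤ stabilizer (Perm α) x) (hH : H.index = 2 * Fintype.card α) :
    H = alternatingGroup α ⊓ stabilizer (Perm α) x := by
  let f : Perm {y // y ≠ x} →* Perm α := ofSubtype
  have hrange : f.range = stabilizer (Perm α) x := by
    ext σ
    rw [mem_stabilizer_iff, Perm.mem_range_ofSubtype_iff, Perm.smul_def]
    refine ⟨fun h ↦ by_contra fun hx ↦ h (mem_support.mpr hx) rfl, fun h y hy hyx ↦ ?_⟩
    exact mem_support.mp hy (hyx ▸ h)
  have hcomap : ∀ K : Subgroup (Perm α), K ≤ stabilizer (Perm α) x →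
      K.index = 2 * Fintype.card α → K.comap f = alternatingGroup {y // y ≠ x} := by
    intro K hKx hK
    apply eq_alternatingGroup_of_index_eq_two
    rw [Subgroup.index_comap, hrange]
    have hmul := Subgroup.relIndex_mul_index hKx
    rw [hK, index_stabilizer_of_transitive, Nat.card_eq_fintype_card] at hmul
    exact Nat.eq_of_mul_eq_mul_right (by omega) hmul
  have hmap : ∀ K : Subgroup (Perm α), K ≤ stabilizer (Perm α) x → (K.comap f).map f = K :=
    fun K hKx ↦ by rw [Subgroup.map_comap_eq, hrange, inf_eq_right.mpr hKx]
  rw [← hmap H hHx, hcomap H hHx hH,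
    ← hcomap _ inf_le_right (alternatingGroup.index_inf_stabilizer hα x), hmap _ inf_le_right]

end AlternatingStabilizer

theorem stmt4 {n : ℕ} (hn : 7 ≤ n) :
    (∃ H : Subgroup (Equiv.Perm (Fin n)),
      H.index = 2 * n ∧ H.normalCore = ⊥) ∧
    ∀ H K : Subgroup (Equiv.Perm (Fin n)),
      H.index = 2 * n → H.normalCore = ⊥ →
      K.index = 2 * n → K.normalCore = ⊥ →
      ∃ g : Equiv.Perm (Fin n),
        K = Subgroup.map (MulAut.conj g).toMonoidHom H := by
  have hcard : Fintype.card (Fin n) = n := Fintype.card_fin n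
  have key : ∀ H : Subgroup (Perm (Fin n)), H.index = 2 * n →
      ∃ x : Fin n, H = alternatingGroup (Fin n) ⊓ stabilizer (Perm (Fin n)) x := by
    intro H hH
    obtain ⟨x, hx⟩ := Subgroup.exists_le_stabilizer_of_index_le (H := H)
      (by omega) (by omega) (by omega)
    exact ⟨x, Subgroup.eq_inf_stabilizer_of_index_eq (by omega) hx (by omega)⟩
  refine ⟨⟨alternatingGroup (Fin n) ⊓ stabilizer (Perm (Fin n)) ⟨0, by omega⟩, ?_,
    alternatingGroup.normalCore_inf_stabilizer _⟩, fun H K hH _ hK _ ↦ ?_⟩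
  · rw [alternatingGroup.index_inf_stabilizer (by omega), hcard]
  · obtain ⟨x, rfl⟩ := key H hH
    obtain ⟨y, rfl⟩ := key K hK
    exact ⟨swap x y, by rw [alternatingGroup.map_conj_inf_stabilizer, swap_apply_left]⟩
end

section
/- Let ρ : Fin r → Equiv.Perm (Fin n) be a string C-group with transitive generated subgroup G, in the general block setup with m = 4 blocks of size k = n/4, with index sets L and C as specified. If the block action is isomorphic to the Klein four group, i.e. the image of φ has cardinality 4 and every element of the image of φ has square equal to 1, then the cardinality of C is at most n/4 − 1. -/
/-- A string C-group: an sggi satisfying the intersection property. -/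
def IsStringC {n r : ℕ} (ρ : Fin r → Equiv.Perm (Fin n)) : Prop :=
  IsSggi ρ ∧ ∀ J K : Set (Fin r),
    Subgroup.closure (ρ '' J) ⊓ Subgroup.closure (ρ '' K) =
      Subgroup.closure (ρ '' (J ∩ K))

open Subgroup

/-- Every independent finite family of elements of `G` has at most `d` members. -/
def IndepBound (G : Type*) [Group G] (d : ℕ) : Prop :=
  ∀ (S : Finset ℕ) (x : ℕ → G),
    (∀ i ∈ S, x i ∉ closure (x '' ((S : Set ℕ) \ {i}))) → S.card ≤ d

namespace IndepBound

variable {G H : Type*} [Group G] [Group H]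

theorem of_injective {d : ℕ} (h : IndepBound H d) (f : G →* H) (hf : Function.Injective f) :
    IndepBound G d := by
  intro S x hx
  refine h S (fun i => f (x i)) fun i hi hmem => hx i hi ?_
  have : (fun i => f (x i)) '' ((S : Set ℕ) \ {i}) = f '' (x '' ((S : Set ℕ) \ {i})) := by
    rw [Set.image_image]
  rw [this, ← MonoidHom.map_closure] at hmem
  obtain ⟨y, hy, hyx⟩ := hmem
  rwa [← hf hyx]

theorem of_surjective {d : ℕ} (h : IndepBound G d) (f : G →* H) (hf : Function.Surjective f) :
    IndepBound H d := by
  intro S x hx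
  choose y hy using fun i => hf (x i)
  refine h S y fun i hi hmem => hx i hi ?_
  have := mem_map_of_mem f hmem
  rw [MonoidHom.map_closure, Set.image_image, hy] at this
  simpa only [hy] using this

theorem of_le {K L : Subgroup G} {d : ℕ} (h : IndepBound L d) (hKL : K ≤ L) : IndepBound K d :=
  h.of_injective (inclusion hKL) (inclusion_injective hKL)

/-- The size of an independent family is subadditive along group extensions. -/
theorem of_ker {d e : ℕ} (f : G →* H) (hH : IndepBound H d) (hK : IndepBound f.ker e) :
    IndepBound G (d + e) := by
  classical
  intro S x hx
  obtain ⟨T, hT, hmin⟩ := (S.powerset.filter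
    (fun T : Finset ℕ =>
      ∀ i ∈ S, f (x i) ∈ closure ((fun i => f (x i)) '' (T : Set ℕ)))).exists_min_image
    Finset.card ⟨S, by
      simp only [Finset.mem_filter, Finset.mem_powerset, subset_refl, true_and]
      exact fun i hi => Subgroup.subset_closure ⟨i, hi, rfl⟩⟩
  simp only [Finset.mem_filter, Finset.mem_powerset] at hT hmin
  obtain ⟨hTS, hgen⟩ := hT
  have hTcard : T.card ≤ d := by
    refine hH T (fun i => f (x i)) fun i hi hmem => ?_
    have := hmin (T.erase i) ⟨(Finset.erase_subset _ _).trans hTS, fun j hj => ?_⟩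
    · exact absurd (Finset.card_erase_lt_of_mem hi) (not_lt.2 this)
    · rw [Finset.coe_erase]
      refine (closure_le _).2 ?_ (hgen j hj)
      rintro _ ⟨k, hk, rfl⟩
      by_cases hki : k = i
      · subst hki; exact hmem
      · exact Subgroup.subset_closure ⟨k, ⟨hk, hki⟩, rfl⟩
  have hlift : ∀ i, ∃ w ∈ closure (x '' (T : Set ℕ)), i ∈ S → f w = f (x i) := by
    intro i
    by_cases hi : i ∈ S
    · have := hgen i hi
      rw [← Set.image_image f x, ← MonoidHom.map_closure] at this
      obtain ⟨w, hw, hwi⟩ := this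
      exact ⟨w, hw, fun _ => hwi⟩
    · exact ⟨1, one_mem _, fun h => absurd h hi⟩
  choose w hw hwf using hlift
  let u : ℕ → f.ker := fun i => if h : i ∈ S then
    ⟨(w i)⁻¹ * x i, by rw [MonoidHom.mem_ker, map_mul, map_inv, hwf i h, inv_mul_cancel]⟩ else 1
  have hu : ∀ i ∈ S, (u i : G) = (w i)⁻¹ * x i := fun i hi => by simp [u, hi]
  have hrest : (S \ T).card ≤ e := by
    refine hK (S \ T) u fun i hi hmem => ?_
    rw [Finset.mem_sdiff] at hi
    refine hx i hi.1 ?_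
    have hsub : (T : Set ℕ) ⊆ (S : Set ℕ) \ {i} := fun k hk =>
      ⟨hTS hk, fun h => hi.2 (by rw [← Set.mem_singleton_iff.1 h]; exact hk)⟩
    have hwmem : ∀ j, w j ∈ closure (x '' ((S : Set ℕ) \ {i})) := fun j =>
      Subgroup.closure_mono (Set.image_mono hsub) (hw j)
    have h1 := mem_map_of_mem f.ker.subtype hmem
    rw [MonoidHom.map_closure, Set.image_image] at h1
    have h2 : (u i : G) ∈ closure (x '' ((S : Set ℕ) \ {i})) := by
      refine (closure_le _).2 ?_ h1
      rintro _ ⟨j, hj, rfl⟩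
      have hjS : j ∈ S := (Finset.mem_sdiff.1 (Finset.mem_coe.1 hj.1)).1
      simp only [Subgroup.subtype_apply, SetLike.mem_coe, hu j hjS]
      exact mul_mem (inv_mem (hwmem j)) (Subgroup.subset_closure ⟨j, ⟨hjS, hj.2⟩, rfl⟩)
    rw [hu i hi.1] at h2
    simpa using mul_mem (hwmem i) h2
  have := Finset.card_sdiff_add_card_eq_card hTS
  omega

theorem of_jointly_injective {K : Type*} [Group K] {d e : ℕ} (f : G →* H) (g : G →* K)
    (hH : IndepBound H d) (hK : IndepBound K e) (hfg : ∀ x, f x = 1 → g x = 1 → x = 1) :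
    IndepBound G (d + e) :=
  of_ker f hH (hK.of_injective (g.comp f.ker.subtype) ((injective_iff_map_eq_one _).2
    fun x hx => Subtype.ext (hfg x x.2 hx)))

theorem sup_of_commute {K L : Subgroup G} {d e : ℕ} (hK : IndepBound K d) (hL : IndepBound L e)
    (hcomm : ∀ x ∈ K, ∀ y ∈ L, Commute x y) : IndepBound (K ⊔ L : Subgroup G) (d + e) := by
  have hc : ∀ (x : K) (y : L), Commute (K.subtype x) (L.subtype y) :=
    fun x y => hcomm x x.2 y y.2
  have hr : (MonoidHom.noncommCoprod K.subtype L.subtype hc).range = K ⊔ L := by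
    rw [MonoidHom.noncommCoprod_range, range_subtype, range_subtype]
  rw [← hr]
  exact (of_jointly_injective (MonoidHom.fst K L) (MonoidHom.snd K L) hK hL
    fun x h1 h2 => Prod.ext h1 h2).of_surjective _ (MonoidHom.rangeRestrict_surjective _)

end IndepBound

theorem two_mul_card_le_of_lt {G : Type*} [Group G] [Finite G] {K L : Subgroup G}
    (h : K < L) : 2 * Nat.card K ≤ Nat.card L := by
  obtain ⟨c, hc⟩ := card_dvd_of_le h.le
  have hK : 0 < Nat.card K := Nat.card_pos
  have hL : 0 < Nat.card L := Nat.card_pos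
  have hne : Nat.card K ≠ Nat.card L := fun he => h.ne (eq_of_le_of_card_ge h.le he.ge)
  have : 2 ≤ c := by
    rcases c with _ | _ | c
    · omega
    · exact absurd (by rw [hc]; ring) hne
    · omega
  rw [hc]; nlinarith

theorem notMem_closure_of_subset {G : Type*} [Group G] {S T : Finset ℕ} {x : ℕ → G} (hTS : T ⊆ S)
    (hx : ∀ i ∈ S, x i ∉ closure (x '' ((S : Set ℕ) \ {i}))) :
    ∀ i ∈ T, x i ∉ closure (x '' ((T : Set ℕ) \ {i})) := fun i hi hmem =>
  hx i (hTS hi) (Subgroup.closure_mono (Set.image_mono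
    (Set.sdiff_subset_sdiff_left (Finset.coe_subset.2 hTS))) hmem)

/-- Adding a new member to an independent family properly enlarges the generated subgroup. -/
theorem closure_lt_closure_of_ssubset {G : Type*} [Group G] {S T : Finset ℕ} {x : ℕ → G}
    (hTS : T ⊂ S) (hx : ∀ i ∈ S, x i ∉ closure (x '' ((S : Set ℕ) \ {i}))) :
    closure (x '' (T : Set ℕ)) < closure (x '' (S : Set ℕ)) := by
  obtain ⟨a, haS, haT⟩ := Finset.exists_of_ssubset hTS
  have hsub : (T : Set ℕ) ⊆ (S : Set ℕ) \ {a} := fun j hj =>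
    ⟨hTS.1 hj, fun h => haT (by rw [← Set.mem_singleton_iff.1 h]; exact hj)⟩
  refine lt_of_le_of_ne
    (Subgroup.closure_mono (Set.image_mono (Finset.coe_subset.2 hTS.1))) fun he => ?_
  exact hx a haS (Subgroup.closure_mono (Set.image_mono hsub)
    (he ▸ Subgroup.subset_closure ⟨a, haS, rfl⟩ : x a ∈ closure (x '' (T : Set ℕ))))

theorem two_pow_card_le_card_closure {G : Type*} [Group G] [Finite G] (S : Finset ℕ) (x : ℕ → G)
    (hx : ∀ i ∈ S, x i ∉ closure (x '' ((S : Set ℕ) \ {i}))) :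
    2 ^ S.card ≤ Nat.card (closure (x '' (S : Set ℕ))) := by
  classical
  induction S using Finset.induction_on with
  | empty => simp
  | insert a S ha ih =>
    rw [Finset.card_insert_of_notMem ha, pow_succ]
    have := two_mul_card_le_of_lt (closure_lt_closure_of_ssubset (Finset.ssubset_insert ha) hx)
    have := ih (notMem_closure_of_subset (Finset.subset_insert a S) hx)
    omega

theorem IndepBound.of_card_lt {G : Type*} [Group G] [Finite G] {d : ℕ}
    (h : Nat.card G < 2 ^ (d + 1)) : IndepBound G d := by
  intro S x hx
  have h1 := two_pow_card_le_card_closure S x hx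
  have h2 : Nat.card (closure (x '' (S : Set ℕ))) ≤ Nat.card G := card_le_card_group _
  have := (Nat.pow_lt_pow_iff_right (by norm_num : 1 < 2)).1 (h1.trans_lt (h2.trans_lt h))
  omega

theorem commuting_involutions_perm_four : ∀ a : Equiv.Perm (Fin 4), a * a = 1 →
    ∀ b : Equiv.Perm (Fin 4), b * b = 1 → a * b = b * a →
    ∀ c : Equiv.Perm (Fin 4), c * c = 1 → a * c = c * a → b * c = c * b →
    b = 1 ∨ a = 1 ∨ a = b ∨ c = 1 ∨ c = a ∨ c = b ∨ c = a * b := by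
  decide +kernel

theorem card_closure_triple_perm_four_ne_eight {x : ℕ → Equiv.Perm (Fin 4)} {i j k : ℕ}
    (hij : i ≠ j) (hik : i ≠ k) (hjk : j ≠ k)
    (hx : ∀ l ∈ ({i, j, k} : Finset ℕ),
      x l ∉ closure (x '' ((({i, j, k} : Finset ℕ) : Set ℕ) \ {l}))) :
    Nat.card (closure (x '' (({i, j, k} : Finset ℕ) : Set ℕ))) ≠ 8 := by
  intro h8
  have hpair : ∀ p ∈ ({i, j, k} : Finset ℕ), ∀ q ∈ ({i, j, k} : Finset ℕ), p ≠ q →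
      x p * x p = 1 ∧ x p * x q = x q * x p := by
    intro p hp q hq hpq
    have hsub : ({p, q} : Finset ℕ) ⊆ {i, j, k} := by
      intro l hl
      simp only [Finset.mem_insert, Finset.mem_singleton] at hl
      rcases hl with rfl | rfl <;> assumption
    have hss : ({p, q} : Finset ℕ) ⊂ {i, j, k} := by
      refine Finset.ssubset_iff_subset_ne.2 ⟨hsub, fun he => ?_⟩
      have := congrArg Finset.card he
      rw [Finset.card_pair hpq, Finset.card_eq_three.2 ⟨i, j, k, hij, hik, hjk, rfl⟩] at this
      omega
    have hss' : ({p} : Finset ℕ) ⊂ {p, q} := by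
      refine Finset.ssubset_iff_subset_ne.2 ⟨by simp, fun he => ?_⟩
      have := congrArg Finset.card he
      rw [Finset.card_pair hpq, Finset.card_singleton] at this
      omega
    have hx2 := notMem_closure_of_subset hsub hx
    have h1 := two_mul_card_le_of_lt (closure_lt_closure_of_ssubset hss hx)
    have h2 := two_pow_card_le_card_closure _ _ hx2
    have h3 := two_mul_card_le_of_lt (closure_lt_closure_of_ssubset hss' hx2)
    have h4 := two_pow_card_le_card_closure _ _ (notMem_closure_of_subset hss'.1 hx2)
    rw [Finset.card_pair hpq] at h2
    rw [Finset.card_singleton] at h4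
    have hc4 : Nat.card (closure (x '' (({p, q} : Finset ℕ) : Set ℕ))) = 2 ^ 2 := by omega
    have hc2 : Nat.card (closure (x '' (({p} : Finset ℕ) : Set ℕ))) = 2 := by omega
    constructor
    · have := pow_card_eq_one' (G := closure (x '' (({p} : Finset ℕ) : Set ℕ)))
        (x := ⟨x p, Subgroup.subset_closure ⟨p, by simp, rfl⟩⟩)
      rw [hc2, pow_two] at this
      exact congrArg Subtype.val this
    · have := (IsPGroup.isMulCommutative_of_card_eq_prime_sq hc4).is_comm.comm
        ⟨x p, Subgroup.subset_closure ⟨p, by simp, rfl⟩⟩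
        ⟨x q, Subgroup.subset_closure ⟨q, by simp, rfl⟩⟩
      exact congrArg Subtype.val this
  have hi : i ∈ ({i, j, k} : Finset ℕ) := by simp
  have hj : j ∈ ({i, j, k} : Finset ℕ) := by simp
  have hk : k ∈ ({i, j, k} : Finset ℕ) := by simp
  have hgen : ∀ p ∈ ({i, j, k} : Finset ℕ), ∀ q ∈ ({i, j, k} : Finset ℕ), q ≠ p →
      x q ∈ closure (x '' ((({i, j, k} : Finset ℕ) : Set ℕ) \ {p})) := fun p _ q hq hqp =>
    Subgroup.subset_closure ⟨q, ⟨hq, hqp⟩, rfl⟩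
  rcases commuting_involutions_perm_four (x i) (hpair i hi j hj hij).1 (x j)
    (hpair j hj k hk hjk).1 (hpair i hi j hj hij).2 (x k) (hpair k hk i hi hik.symm).1
    (hpair i hi k hk hik).2 (hpair j hj k hk hjk).2 with h | h | h | h | h | h | h
  · exact hx j hj (h ▸ one_mem _)
  · exact hx i hi (h ▸ one_mem _)
  · exact hx i hi (h ▸ hgen i hi j hj hij.symm)
  · exact hx k hk (h ▸ one_mem _)
  · exact hx k hk (h ▸ hgen k hk i hi hik)
  · exact hx k hk (h ▸ hgen k hk j hj hjk)
  · exact hx k hk (h ▸ mul_mem (hgen k hk i hi hik) (hgen k hk j hj hjk))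

theorem IndepBound.perm_fin_four : IndepBound (Equiv.Perm (Fin 4)) 3 := by
  intro S x hx
  by_contra hS
  obtain ⟨T, hTS, hT⟩ := Finset.exists_subset_card_eq (show 4 ≤ S.card by omega)
  replace hx := notMem_closure_of_subset hTS hx
  have hcard : Nat.card (Equiv.Perm (Fin 4)) = 24 := by
    rw [Nat.card_eq_fintype_card, Fintype.card_perm, Fintype.card_fin]; rfl
  have h24 : Nat.card (closure (x '' (T : Set ℕ))) ≤ 24 := hcard ▸ card_le_card_group _
  obtain ⟨i, j, k, l, hij, hik, hil, hjk, hjl, hkl, rfl⟩ := Finset.card_eq_four.1 hT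
  have key : ∀ m ∈ ({k, l} : Finset ℕ), closure (x '' (({i, j, m} : Finset ℕ) : Set ℕ)) =
      alternatingGroup (Fin 4) := by
    intro m hm
    have hm' : i ≠ m ∧ j ≠ m ∧ ({i, j, m} : Finset ℕ) ⊆ {i, j, k, l} := by
      simp only [Finset.mem_insert, Finset.mem_singleton] at hm
      rcases hm with rfl | rfl
      · exact ⟨hik, hjk, by intro; simp; tauto⟩
      · exact ⟨hil, hjl, by intro; simp; tauto⟩
    obtain ⟨him, hjm, hsub⟩ := hm'
    have h3 : ({i, j, m} : Finset ℕ).card = 3 :=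
      Finset.card_eq_three.2 ⟨i, j, m, hij, him, hjm, rfl⟩
    have hss : ({i, j, m} : Finset ℕ) ⊂ {i, j, k, l} :=
      Finset.ssubset_iff_subset_ne.2 ⟨hsub, fun he => by rw [he] at h3; omega⟩
    have hx3 := notMem_closure_of_subset hsub hx
    have h1 := two_mul_card_le_of_lt (closure_lt_closure_of_ssubset hss hx)
    have h2 := two_pow_card_le_card_closure _ _ hx3
    have h8 := card_closure_triple_perm_four_ne_eight hij him hjm hx3
    have hmul := card_mul_index (closure (x '' (({i, j, m} : Finset ℕ) : Set ℕ)))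
    rw [hcard] at hmul
    rw [h3] at h2
    apply Equiv.Perm.eq_alternatingGroup_of_index_eq_two
    generalize Nat.card (closure (x '' (({i, j, m} : Finset ℕ) : Set ℕ))) = c at *
    have : c ≤ 12 := by omega
    interval_cases c <;> omega
  refine hx l (by simp) ?_
  have hl : x l ∈ closure (x '' (({i, j, k} : Finset ℕ) : Set ℕ)) := by
    rw [key k (by simp), ← key l (by simp)]
    exact Subgroup.subset_closure ⟨l, by simp, rfl⟩
  refine Subgroup.closure_mono (Set.image_mono ?_) hl
  intro m hm
  simp only [Finset.coe_insert, Finset.coe_singleton, Set.mem_insert_iff,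
    Set.mem_singleton_iff] at hm
  rcases hm with rfl | rfl | rfl <;> simp [*]

theorem IndepBound.perm_of_card_le_four {Ω : Type*} [Fintype Ω] {d : ℕ}
    (h : Fintype.card Ω = d + 1) (h4 : d ≤ 3) : IndepBound (Equiv.Perm Ω) d := by
  classical
  rcases h4.eq_or_lt with rfl | h3
  · exact IndepBound.perm_fin_four.of_injective
      (Fintype.equivFinOfCardEq h).permCongrHom.toMonoidHom
      (Fintype.equivFinOfCardEq h).permCongrHom.injective
  · apply IndepBound.of_card_lt
    rw [Nat.card_eq_fintype_card, Fintype.card_perm, h]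
    interval_cases d <;> decide

section Restriction

variable {Ω : Type*}

open Classical in
/-- The permutations induced on `s` by those members of a family that preserve `s`. -/
noncomputable def restrictFamily (σ : ℕ → Equiv.Perm Ω) (s : Set Ω) (i : ℕ) : Equiv.Perm s :=
  if h : ∀ x, σ i x ∈ s ↔ x ∈ s then (σ i).subtypePerm h else 1

theorem restrictFamily_apply {σ : ℕ → Equiv.Perm Ω} {s : Set Ω} {i : ℕ}
    (h : ∀ x, σ i x ∈ s ↔ x ∈ s) (x : s) : (restrictFamily σ s i x : Ω) = σ i x := by
  simp [restrictFamily, h]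

theorem commute_restrictFamily {σ : ℕ → Equiv.Perm Ω} {i j : ℕ} (h : Commute (σ i) (σ j))
    (s : Set Ω) : Commute (restrictFamily σ s i) (restrictFamily σ s j) := by
  by_cases hi : ∀ x, σ i x ∈ s ↔ x ∈ s
  · by_cases hj : ∀ x, σ j x ∈ s ↔ x ∈ s
    · ext x
      simp only [Equiv.Perm.mul_apply, restrictFamily_apply hi, restrictFamily_apply hj]
      exact Equiv.congr_fun h.eq x
    · rw [restrictFamily, restrictFamily, dif_neg hj]
      exact Commute.one_right _
  · rw [restrictFamily, dif_neg hi]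
    exact Commute.one_left _

theorem exists_restrictHom {σ : ℕ → Equiv.Perm Ω} {s : Set Ω} {K : Set ℕ}
    (hK : ∀ i ∈ K, ∀ x, σ i x ∈ s ↔ x ∈ s) :
    ∃ f : closure (σ '' K) →* closure (restrictFamily σ s '' K),
      ∀ g (x : s), ((f g : Equiv.Perm s) x : Ω) = (g : Equiv.Perm Ω) x := by
  have hmem : ∀ g ∈ closure (σ '' K), ∀ x, g x ∈ s ↔ x ∈ s := by
    intro g hg
    induction hg using closure_induction with
    | mem g hg => obtain ⟨i, hi, rfl⟩ := hg; exact hK i hi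
    | one => simp
    | mul g h _ _ hg hh => intro x; rw [Equiv.Perm.mul_apply, hg, hh]
    | inv g _ hg => intro x; rw [← hg, ← Equiv.Perm.mul_apply, mul_inv_cancel, Equiv.Perm.one_apply]
  have hcl : ∀ g (hg : g ∈ closure (σ '' K)),
      g.subtypePerm (hmem g hg) ∈ closure (restrictFamily σ s '' K) := by
    intro g hg
    induction hg using closure_induction with
    | mem g hg =>
      obtain ⟨i, hi, rfl⟩ := hg
      refine Subgroup.subset_closure ⟨i, hi, ?_⟩
      rw [restrictFamily, dif_pos (hK i hi)]
    | one => exact one_mem (closure (restrictFamily σ s '' K))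
    | mul g h _ _ hg hh => exact mul_mem hg hh
    | inv g _ hg => exact inv_mem hg
  exact ⟨MonoidHom.mk' (fun g => ⟨_, hcl g g.2⟩) fun _ _ => rfl, fun _ _ => rfl⟩

theorem apply_mem_orbit_closure_iff {σ : ℕ → Equiv.Perm Ω} {K : Set ℕ} {i : ℕ} (hi : i ∈ K)
    (x y : Ω) : σ i y ∈ MulAction.orbit (closure (σ '' K)) x ↔
      y ∈ MulAction.orbit (closure (σ '' K)) x :=
  calc σ i y ∈ MulAction.orbit (closure (σ '' K)) x
      ↔ x ∈ MulAction.orbit (closure (σ '' K))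
        ((⟨σ i, Subgroup.subset_closure ⟨i, hi, rfl⟩⟩ : closure (σ '' K)) • y) :=
        MulAction.mem_orbit_symm
    _ ↔ y ∈ MulAction.orbit (closure (σ '' K)) x := by
        rw [MulAction.orbit_smul, MulAction.mem_orbit_symm]

end Restriction

section CommutingSubgroups

variable {Ω : Type*} {A B : Subgroup (Equiv.Perm Ω)}

theorem exists_mul_of_mem_sup {G : Type*} [Group G] {A B : Subgroup G}
    (hAB : ∀ p ∈ A, ∀ q ∈ B, Commute p q) {g : G} (hg : g ∈ A ⊔ B) :
    ∃ p ∈ A, ∃ q ∈ B, g = q * p := by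
  have hc : ∀ (x : A) (y : B), Commute (A.subtype x) (B.subtype y) :=
    fun x y => hAB x x.2 y y.2
  have hr : (MonoidHom.noncommCoprod A.subtype B.subtype hc).range = A ⊔ B := by
    rw [MonoidHom.noncommCoprod_range, range_subtype, range_subtype]
  rw [← hr] at hg
  obtain ⟨⟨p, q⟩, rfl⟩ := hg
  exact ⟨p, p.2, q, q.2, hAB p p.2 q q.2⟩

/-- If two commuting subgroups generate a transitive group, then each of them acts faithfully on
each of its orbits. -/
theorem eq_one_of_forall_mem_orbit (hAB : ∀ p ∈ A, ∀ q ∈ B, Commute p q)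
    (htrans : MulAction.IsPretransitive (A ⊔ B : Subgroup (Equiv.Perm Ω)) Ω) (x : Ω)
    {g : Equiv.Perm Ω} (hg : g ∈ A) (h : ∀ y ∈ MulAction.orbit A x, g y = y) : g = 1 := by
  ext y
  obtain ⟨⟨u, hu⟩, rfl⟩ := htrans.exists_smul_eq x y
  obtain ⟨p, hp, q, hq, rfl⟩ := exists_mul_of_mem_sup hAB hu
  change g (q (p x)) = q (p x)
  rw [← Equiv.Perm.mul_apply g q, (hAB g hg q hq).eq, Equiv.Perm.mul_apply,
    h (p x) ⟨⟨p, hp⟩, rfl⟩]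

theorem ncard_orbit_dvd_card [Fintype Ω] (hAB : ∀ p ∈ A, ∀ q ∈ B, Commute p q)
    (htrans : MulAction.IsPretransitive (A ⊔ B : Subgroup (Equiv.Perm Ω)) Ω) (x : Ω) :
    (MulAction.orbit A x).ncard ∣ Fintype.card Ω := by
  have hN : (A.subgroupOf (A ⊔ B)).Normal := by
    rw [normal_subgroupOf_iff_le_normalizer le_sup_left, sup_le_iff]
    refine ⟨le_normalizer, fun q hq => ?_⟩
    rw [mem_normalizer_iff]
    intro p
    constructor
    · intro hp
      rwa [← (hAB p hp q hq).eq, mul_inv_cancel_right]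
    · intro hp
      have := (hAB _ hp q hq).eq
      rw [mul_assoc, mul_assoc, inv_mul_cancel, mul_one] at this
      rwa [← mul_left_cancel this] at hp
  have horb : MulAction.orbit (A.subgroupOf (A ⊔ B)) x = MulAction.orbit A x := by
    ext y
    constructor
    · rintro ⟨⟨⟨g, hg⟩, hgA⟩, rfl⟩
      exact ⟨⟨g, hgA⟩, rfl⟩
    · rintro ⟨⟨g, hg⟩, rfl⟩
      exact ⟨⟨⟨g, le_sup_left (a := A) hg⟩, hg⟩, rfl⟩
  have := (MulAction.IsBlock.orbit_of_normal (N := A.subgroupOf (A ⊔ B)) x).ncard_dvd_card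
    ⟨x, MulAction.mem_orbit_self x⟩
  rwa [horb, Nat.card_eq_fintype_card] at this

/-- A group of permutations centralized by a transitive group is semiregular. -/
theorem card_le_ncard_orbit [Finite Ω] (hAB : ∀ p ∈ A, ∀ q ∈ B, Commute p q)
    (hB : MulAction.IsPretransitive B Ω) (x : Ω) :
    Nat.card A ≤ (MulAction.orbit A x).ncard := by
  refine Nat.card_le_card_of_injective
    (fun g : A => (⟨g • x, MulAction.mem_orbit x g⟩ : MulAction.orbit A x)) fun g h hgh => ?_
  have hgh' : (g : Equiv.Perm Ω) x = (h : Equiv.Perm Ω) x := congrArg Subtype.val hgh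
  ext y
  obtain ⟨q, rfl⟩ := hB.exists_smul_eq x y
  change ((g : Equiv.Perm Ω) * q) x = ((h : Equiv.Perm Ω) * q) x
  rw [(hAB g g.2 q q.2).eq, (hAB h h.2 q q.2).eq, Equiv.Perm.mul_apply, hgh', Equiv.Perm.mul_apply]

theorem orbit_ne_univ_of_not_isPretransitive {G : Type*} [Group G] [MulAction G Ω]
    (h : ¬ MulAction.IsPretransitive G Ω) (x : Ω) : MulAction.orbit G x ≠ Set.univ := by
  intro he
  refine h ⟨fun y z => ?_⟩
  obtain ⟨g, rfl⟩ : y ∈ MulAction.orbit G x := he ▸ Set.mem_univ y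
  obtain ⟨k, rfl⟩ : z ∈ MulAction.orbit G x := he ▸ Set.mem_univ z
  exact ⟨k * g⁻¹, by simp [mul_smul]⟩

end CommutingSubgroups

section Removal

universe u

variable {Ω : Type u}

/-- Splitting an invariant set off a family of permutations. -/
theorem exists_removal_of_invariant [Fintype Ω] {σ : ℕ → Equiv.Perm Ω} {J E : Finset ℕ}
    (hE : E.card ≤ 1) {s : Set Ω} (hs : ∀ i ∈ J \ E, ∀ x, σ i x ∈ s ↔ x ∈ s)
    (ih : ∃ (R : Finset ℕ) (d : ℕ), R.card + d + 1 ≤ s.ncard ∧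
      IndepBound (closure (restrictFamily σ s '' ((J \ R : Finset ℕ) : Set ℕ))) d)
    (ihc : ∃ (R : Finset ℕ) (d : ℕ), R.card + d + 1 ≤ sᶜ.ncard ∧
      IndepBound (closure (restrictFamily σ sᶜ '' ((J \ R : Finset ℕ) : Set ℕ))) d) :
    ∃ (R : Finset ℕ) (d : ℕ), R.card + d + 1 ≤ Fintype.card Ω ∧
      IndepBound (closure (σ '' ((J \ R : Finset ℕ) : Set ℕ))) d := by
  classical
  obtain ⟨R₁, d₁, hcard₁, hbound₁⟩ := ih
  obtain ⟨R₂, d₂, hcard₂, hbound₂⟩ := ihc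
  refine ⟨E ∪ (R₁ ∪ R₂), d₁ + d₂, ?_, ?_⟩
  · have h1 := Finset.card_union_le E (R₁ ∪ R₂)
    have h2 := Finset.card_union_le R₁ R₂
    have h3 := Set.ncard_add_ncard_compl s
    rw [Nat.card_eq_fintype_card] at h3
    omega
  · have hs' : ∀ i ∈ ((J \ (E ∪ (R₁ ∪ R₂)) : Finset ℕ) : Set ℕ), ∀ x, σ i x ∈ s ↔ x ∈ s := by
      intro i hi
      simp only [Finset.coe_sdiff, Finset.coe_union, Set.mem_sdiff, Set.mem_union, Finset.mem_coe,
        not_or] at hi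
      exact hs i (Finset.mem_sdiff.2 ⟨hi.1, hi.2.1⟩)
    obtain ⟨f, hf⟩ := exists_restrictHom hs'
    obtain ⟨g, hg⟩ := exists_restrictHom (s := sᶜ)
      fun i hi x => not_congr (hs' i hi x)
    refine IndepBound.of_jointly_injective f g
      (hbound₁.of_le (Subgroup.closure_mono (Set.image_mono ?_)))
      (hbound₂.of_le (Subgroup.closure_mono (Set.image_mono ?_))) fun p hfp hgp => ?_
    · exact Finset.coe_subset.2 (Finset.sdiff_subset_sdiff le_rfl
        (Finset.subset_union_left.trans Finset.subset_union_right))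
    · exact Finset.coe_subset.2 (Finset.sdiff_subset_sdiff le_rfl
        (Finset.subset_union_right.trans Finset.subset_union_right))
    · ext x
      by_cases hx : x ∈ s
      · rw [← hf p ⟨x, hx⟩, hfp]; rfl
      · rw [← hg p ⟨x, hx⟩, hgp]; rfl

theorem sup_closure_filter (σ : ℕ → Equiv.Perm Ω) (J : Finset ℕ) (i : ℕ) :
    closure (σ '' ((J.filter (· < i) : Finset ℕ) : Set ℕ)) ⊔
      closure (σ '' ((J.filter (i < ·) : Finset ℕ) : Set ℕ)) =
      closure (σ '' ((J \ {i} : Finset ℕ) : Set ℕ)) := by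
  rw [← Subgroup.closure_union, ← Set.image_union]
  congr 2
  ext j
  simp only [Finset.coe_filter, Set.mem_union, Set.mem_ofPred_eq, Finset.coe_sdiff,
    Finset.coe_singleton, Set.mem_sdiff, Finset.mem_coe, Set.mem_singleton_iff]
  have := lt_or_lt_iff_ne (a := j) (b := i)
  tauto

theorem commute_closure_filter {σ : ℕ → Equiv.Perm Ω} {J : Finset ℕ}
    (hσ : ∀ i ∈ J, ∀ j ∈ J, i + 1 < j → Commute (σ i) (σ j)) {K L : Finset ℕ} (hK : K ⊆ J)
    (hL : L ⊆ J) (hKL : ∀ i ∈ K, ∀ j ∈ L, i + 1 < j) :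
    ∀ p ∈ closure (σ '' (K : Set ℕ)), ∀ q ∈ closure (σ '' (L : Set ℕ)), Commute p q := by
  intro p hp q hq
  have h : closure (σ '' (K : Set ℕ)) ≤ centralizer (closure (σ '' (L : Set ℕ))) := by
    rw [closure_le, centralizer_closure]
    rintro _ ⟨i, hi, rfl⟩
    rw [SetLike.mem_coe, mem_centralizer_iff]
    rintro _ ⟨j, hj, rfl⟩
    exact (hσ i (hK hi) j (hL hj) (hKL i hi j hj)).eq.symm
  exact (mem_centralizer_iff.1 (h hp) q hq).symm

/-- When a parabolic subgroup with two commuting factors is transitive, the degree splits into the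
orbit lengths of the factors. -/
theorem exists_removal_of_not_isPretransitive [Fintype Ω] [Nonempty Ω] {σ : ℕ → Equiv.Perm Ω}
    {J : Finset ℕ} (hσ : ∀ i ∈ J, ∀ j ∈ J, i + 1 < j → Commute (σ i) (σ j))
    (ih : ∀ s : Set Ω, s.Nonempty → s ≠ Set.univ → ∀ K ⊆ J, ∃ (R : Finset ℕ) (d : ℕ),
      R.card + d + 1 ≤ s.ncard ∧
        IndepBound (closure (restrictFamily σ s '' ((K \ R : Finset ℕ) : Set ℕ))) d)
    {i : ℕ}
    (htrans : MulAction.IsPretransitive (closure (σ '' ((J \ {i} : Finset ℕ) : Set ℕ))) Ω)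
    (hA : ¬ MulAction.IsPretransitive
      (closure (σ '' ((J.filter (· < i) : Finset ℕ) : Set ℕ))) Ω)
    (hB : ¬ MulAction.IsPretransitive
      (closure (σ '' ((J.filter (i < ·) : Finset ℕ) : Set ℕ))) Ω) :
    ∃ (R : Finset ℕ) (d : ℕ), R.card + d + 1 ≤ Fintype.card Ω ∧
      IndepBound (closure (σ '' ((J \ R : Finset ℕ) : Set ℕ))) d := by
  classical
  obtain ⟨x⟩ := ‹Nonempty Ω›
  have hcomm := commute_closure_filter hσ (Finset.filter_subset (· < i) J)
    (Finset.filter_subset (i < ·) J) (fun a ha b hb => by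
      have := (Finset.mem_filter.1 ha).2
      have := (Finset.mem_filter.1 hb).2
      omega)
  rw [← sup_closure_filter σ J i] at htrans
  have htrans' := htrans
  rw [sup_comm] at htrans'
  have hdvdA := ncard_orbit_dvd_card hcomm htrans x
  have hdvdB := ncard_orbit_dvd_card (fun p hp q hq => (hcomm q hq p hp).symm) htrans' x
  have half : ∀ s : Set Ω, s ≠ Set.univ → s.ncard ∣ Fintype.card Ω →
      2 * s.ncard ≤ Fintype.card Ω := by
    intro s hs hdvd
    have hlt : s.ncard < Fintype.card Ω := by
      rw [← Nat.card_eq_fintype_card, ← Set.ncard_univ]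
      exact Set.ncard_lt_ncard (Set.ssubset_univ_iff.2 hs)
    obtain ⟨c, hc⟩ := hdvd
    rcases c with _ | _ | c
    · omega
    · omega
    · rw [hc]; nlinarith
  have hA2 := half _ (orbit_ne_univ_of_not_isPretransitive hA x) hdvdA
  have hB2 := half _ (orbit_ne_univ_of_not_isPretransitive hB x) hdvdB
  obtain ⟨R₁, d₁, hcard₁, hbound₁⟩ := ih _ ⟨x, MulAction.mem_orbit_self x⟩
    (orbit_ne_univ_of_not_isPretransitive hA x) _ (Finset.filter_subset (· < i) J)
  obtain ⟨R₂, d₂, hcard₂, hbound₂⟩ := ih _ ⟨x, MulAction.mem_orbit_self x⟩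
    (orbit_ne_univ_of_not_isPretransitive hB x) _ (Finset.filter_subset (i < ·) J)
  have hfaithful : ∀ (A B : Subgroup (Equiv.Perm Ω)) (K R : Finset ℕ) (d : ℕ),
      A = closure (σ '' (K : Set ℕ)) → (∀ p ∈ A, ∀ q ∈ B, Commute p q) →
      MulAction.IsPretransitive (A ⊔ B : Subgroup (Equiv.Perm Ω)) Ω →
      IndepBound (closure (restrictFamily σ (MulAction.orbit A x) ''
        ((K \ R : Finset ℕ) : Set ℕ))) d →
      IndepBound (closure (σ '' ((K \ R : Finset ℕ) : Set ℕ))) d := by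
    rintro A B K R d rfl hAB hT hb
    obtain ⟨f, hf⟩ := exists_restrictHom (σ := σ) (K := ((K \ R : Finset ℕ) : Set ℕ))
      (s := MulAction.orbit (closure (σ '' (K : Set ℕ))) x) fun j hj y =>
        apply_mem_orbit_closure_iff (Finset.mem_sdiff.1 (Finset.mem_coe.1 hj)).1 x y
    refine hb.of_injective f ((injective_iff_map_eq_one _).2 fun g hg => ?_)
    refine Subtype.ext (eq_one_of_forall_mem_orbit hAB hT x (Subgroup.closure_mono
      (Set.image_mono (Finset.coe_subset.2 Finset.sdiff_subset)) g.2) fun y hy => ?_)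
    rw [← hf g ⟨y, hy⟩, hg]; rfl
  have hb₁ := hfaithful _ _ _ _ _ rfl hcomm htrans hbound₁
  have hb₂ := hfaithful _ _ _ _ _ rfl (fun p hp q hq => (hcomm q hq p hp).symm) htrans' hbound₂
  refine ⟨{i} ∪ (R₁ ∪ R₂), d₁ + d₂, ?_, ?_⟩
  · have h1 := Finset.card_union_le {i} (R₁ ∪ R₂)
    have h2 := Finset.card_union_le R₁ R₂
    rw [Finset.card_singleton] at h1
    omega
  · refine (hb₁.sup_of_commute hb₂ fun p hp q hq => hcomm p ?_ q ?_).of_le ?_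
    · exact Subgroup.closure_mono (Set.image_mono (Finset.coe_subset.2 Finset.sdiff_subset)) hp
    · exact Subgroup.closure_mono (Set.image_mono (Finset.coe_subset.2 Finset.sdiff_subset)) hq
    · rw [← Subgroup.closure_union, ← Set.image_union]
      refine Subgroup.closure_mono (Set.image_mono fun j hj => ?_)
      simp only [Finset.coe_sdiff, Finset.coe_union, Finset.coe_singleton, Set.mem_sdiff,
        Set.mem_union, Finset.mem_coe, Set.mem_singleton_iff, not_or, Finset.coe_filter,
        Set.mem_ofPred_eq] at hj ⊢
      have := lt_or_lt_iff_ne (a := j) (b := i)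
      tauto

theorem IndepBound.log_card {G : Type*} [Group G] [Finite G] {c : ℕ} (h : Nat.card G ≤ c) :
    IndepBound G (Nat.log 2 c) :=
  IndepBound.of_card_lt (h.trans_lt (Nat.lt_pow_succ_log_self (by norm_num) c))

theorem log_add_log_le {n c : ℕ} (hn : 5 ≤ n) (hc : c ∣ n) (hcn : c < n) :
    Nat.log 2 c + Nat.log 2 n + 3 ≤ n := by
  have hhalf : 2 * c ≤ n := by
    obtain ⟨e, rfl⟩ := hc
    rcases e with _ | _ | e
    · omega
    · omega
    · nlinarith
  rcases hn.eq_or_lt with rfl | hn6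
  · have : c ≤ 2 := by omega
    interval_cases c <;> first | omega | decide
  · have hlc : Nat.log 2 c + 1 ≤ Nat.log 2 n := by
      rcases Nat.eq_zero_or_pos c with rfl | hc0
      · obtain ⟨e, rfl⟩ := hc; omega
      · rw [← Nat.log_mul_base (by norm_num) hc0.ne', mul_comm]
        exact Nat.log_mono_right hhalf
    have hpow := Nat.pow_log_le_self 2 (show n ≠ 0 by omega)
    have hbig : ∀ l, 3 ≤ l → 2 * l + 2 ≤ 2 ^ l := by
      intro l hl
      induction l, hl using Nat.le_induction with
      | base => norm_num
      | succ l _ ih => rw [pow_succ]; omega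
    by_cases hl : 3 ≤ Nat.log 2 n
    · have := hbig _ hl; omega
    · omega

/-- The remaining transitive case: after removal of two consecutive generators the group is a
product of two commuting semiregular groups. -/
theorem exists_removal_of_forall_isPretransitive [Fintype Ω] {σ : ℕ → Equiv.Perm Ω}
    {J : Finset ℕ} (hσ : ∀ i ∈ J, ∀ j ∈ J, i + 1 < j → Commute (σ i) (σ j))
    (hcard : 5 ≤ Fintype.card Ω) (hJ : J.Nonempty)
    (htrans : ∀ i ∈ J,
      MulAction.IsPretransitive (closure (σ '' ((J \ {i} : Finset ℕ) : Set ℕ))) Ω)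
    (hAB : ∀ i ∈ J, MulAction.IsPretransitive
        (closure (σ '' ((J.filter (· < i) : Finset ℕ) : Set ℕ))) Ω ∨
      MulAction.IsPretransitive
        (closure (σ '' ((J.filter (i < ·) : Finset ℕ) : Set ℕ))) Ω) :
    ∃ (R : Finset ℕ) (d : ℕ), R.card + d + 1 ≤ Fintype.card Ω ∧
      IndepBound (closure (σ '' ((J \ R : Finset ℕ) : Set ℕ))) d := by
  classical
  have hnt : Nontrivial Ω := Fintype.one_lt_card_iff_nontrivial.1 (by omega)
  have hempty : ∀ K : Finset ℕ, MulAction.IsPretransitive (closure (σ '' (K : Set ℕ))) Ω →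
      K.Nonempty := by
    intro K hK
    rw [Finset.nonempty_iff_ne_empty]
    rintro rfl
    obtain ⟨x, y, hxy⟩ := exists_pair_ne Ω
    obtain ⟨⟨g, hg⟩, hgx⟩ := hK.exists_smul_eq x y
    simp only [Finset.coe_empty, Set.image_empty, Subgroup.closure_empty, mem_bot] at hg
    subst hg
    exact hxy hgx
  have hmin := J.min'_mem hJ
  obtain ⟨t, ht, htmax⟩ := (J.filter fun i => MulAction.IsPretransitive
    (closure (σ '' ((J.filter (i < ·) : Finset ℕ) : Set ℕ))) Ω).exists_max_image id
    ⟨J.min' hJ, by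
      refine Finset.mem_filter.2 ⟨hmin, (hAB _ hmin).resolve_left fun h => ?_⟩
      obtain ⟨j, hj⟩ := hempty _ h
      rw [Finset.mem_filter] at hj
      exact absurd (J.min'_le j hj.1) (not_le.2 hj.2)⟩
  rw [Finset.mem_filter] at ht
  obtain ⟨htJ, htB⟩ := ht
  obtain ⟨t', ht', ht'min⟩ := (J.filter (t < ·)).exists_min_image id (hempty _ htB)
  have ht'' := Finset.mem_filter.1 ht'
  have hnotB : ¬ MulAction.IsPretransitive
      (closure (σ '' ((J.filter (t' < ·) : Finset ℕ) : Set ℕ))) Ω := fun h =>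
    absurd (htmax t' (Finset.mem_filter.2 ⟨ht''.1, h⟩)) (not_le.2 ht''.2)
  have hA := (hAB t' ht''.1).resolve_right hnotB
  obtain ⟨x⟩ := hnt.to_nonempty
  have hfs : ∀ p : ℕ → Prop, ∀ [DecidablePred p], J.filter p ⊆ J := fun p _ =>
    Finset.filter_subset p J
  have hcomm : ∀ i ∈ J, ∀ p ∈ closure (σ '' ((J.filter (· < i) : Finset ℕ) : Set ℕ)),
      ∀ q ∈ closure (σ '' ((J.filter (i < ·) : Finset ℕ) : Set ℕ)), Commute p q :=
    fun i _ => commute_closure_filter hσ (hfs _) (hfs _) (fun a ha b hb => by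
      have := (Finset.mem_filter.1 ha).2
      have := (Finset.mem_filter.1 hb).2
      omega)
  have hcomm' : ∀ p ∈ closure (σ '' ((J.filter (t' < ·) : Finset ℕ) : Set ℕ)),
      ∀ q ∈ closure (σ '' ((J.filter (· < t') : Finset ℕ) : Set ℕ)), Commute p q :=
    fun p hp q hq => (hcomm t' ht''.1 q hq p hp).symm
  have hX : Nat.card (closure (σ '' ((J.filter (· < t) : Finset ℕ) : Set ℕ))) ≤
      Fintype.card Ω := by
    refine (card_le_ncard_orbit (hcomm t htJ) htB x).trans ?_
    rw [← Nat.card_eq_fintype_card, ← Set.ncard_univ]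
    exact Set.ncard_le_ncard (Set.subset_univ _)
  have hY := card_le_ncard_orbit hcomm' hA x
  have hdvd := ncard_orbit_dvd_card hcomm' (by
    rw [sup_comm, sup_closure_filter]; exact htrans t' ht''.1) x
  have hlt : (MulAction.orbit (closure (σ '' ((J.filter (t' < ·) : Finset ℕ) : Set ℕ))) x).ncard
      < Fintype.card Ω := by
    rw [← Nat.card_eq_fintype_card, ← Set.ncard_univ]
    exact Set.ncard_lt_ncard (Set.ssubset_univ_iff.2
      (orbit_ne_univ_of_not_isPretransitive hnotB x))
  refine ⟨{t, t'}, _, ?_, ((IndepBound.log_card hY).sup_of_commute (IndepBound.log_card hX)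
    fun p hp q hq => hcomm' p hp q ?_).of_le ?_⟩
  · have := Finset.card_le_two (a := t) (b := t')
    have := log_add_log_le hcard hdvd hlt
    omega
  · refine Subgroup.closure_mono (Set.image_mono (Finset.coe_subset.2 ?_)) hq
    exact Finset.monotone_filter_right _ fun j _ hj => lt_trans hj ht''.2
  · rw [← Subgroup.closure_union, ← Set.image_union]
    refine Subgroup.closure_mono (Set.image_mono fun j hj => ?_)
    simp only [Finset.coe_sdiff, Finset.coe_insert, Finset.coe_singleton, Set.mem_sdiff,
      Set.mem_union, Finset.mem_coe, Set.mem_insert_iff, Set.mem_singleton_iff, not_or,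
      Finset.coe_filter, Set.mem_ofPred_eq] at hj ⊢
    rcases lt_trichotomy j t with h | h | h
    · exact Or.inr ⟨hj.1, h⟩
    · exact absurd h hj.2.1
    · have : t' ≤ j := ht'min j (Finset.mem_filter.2 ⟨hj.1, h⟩)
      exact Or.inl ⟨hj.1, lt_of_le_of_ne this (Ne.symm hj.2.2)⟩

/-- A family of permutations of `n` points in which non-neighbours commute becomes, after the
removal of some members, a family generating a group in which independent families are short
enough that the total is at most `n - 1`. -/
theorem exists_removal [Fintype Ω] [Nonempty Ω] (σ : ℕ → Equiv.Perm Ω) (J : Finset ℕ)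
    (hσ : ∀ i ∈ J, ∀ j ∈ J, i + 1 < j → Commute (σ i) (σ j)) :
    ∃ (R : Finset ℕ) (d : ℕ), R.card + d + 1 ≤ Fintype.card Ω ∧
      IndepBound (closure (σ '' ((J \ R : Finset ℕ) : Set ℕ))) d := by
  classical
  induction hn : Fintype.card Ω using Nat.strong_induction_on generalizing Ω J with
  | _ n IH =>
  subst hn
  have hpos : 0 < Fintype.card Ω := Fintype.card_pos
  by_cases h4 : Fintype.card Ω ≤ 4
  · refine ⟨∅, Fintype.card Ω - 1, by simp; omega, ?_⟩
    exact (IndepBound.perm_of_card_le_four (by omega) (by omega)).of_injective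
      (Subgroup.subtype _) (Subgroup.subtype_injective _)
  have ih : ∀ s : Set Ω, s.Nonempty → s ≠ Set.univ → ∀ K ⊆ J, ∃ (R : Finset ℕ) (d : ℕ),
      R.card + d + 1 ≤ s.ncard ∧
        IndepBound (closure (restrictFamily σ s '' ((K \ R : Finset ℕ) : Set ℕ))) d := by
    intro s hs hsu K hK
    have := hs.to_subtype
    have hcard : Fintype.card s = s.ncard := by
      rw [← Nat.card_eq_fintype_card]; rfl
    refine IH _ ?_ (restrictFamily σ s) K (fun i hi j hj hij =>
      commute_restrictFamily (hσ i (hK hi) j (hK hj) hij) s) hcard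
    rw [← Nat.card_eq_fintype_card (α := Ω), ← Set.ncard_univ]
    exact Set.ncard_lt_ncard (Set.ssubset_univ_iff.2 hsu)
  obtain ⟨x⟩ := ‹Nonempty Ω›
  have hsplit : ∀ E : Finset ℕ, E.card ≤ 1 →
      ¬ MulAction.IsPretransitive (closure (σ '' ((J \ E : Finset ℕ) : Set ℕ))) Ω →
      ∃ (R : Finset ℕ) (d : ℕ), R.card + d + 1 ≤ Fintype.card Ω ∧
        IndepBound (closure (σ '' ((J \ R : Finset ℕ) : Set ℕ))) d := by
    intro E hE hnt
    have hne := orbit_ne_univ_of_not_isPretransitive hnt x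
    refine exists_removal_of_invariant hE (fun i hi y =>
      apply_mem_orbit_closure_iff (Finset.mem_coe.2 hi) x y)
      (ih _ ⟨x, MulAction.mem_orbit_self x⟩ hne J le_rfl)
      (ih _ (Set.nonempty_compl.2 hne) ?_ J le_rfl)
    exact (Set.compl_ne_univ).2 ⟨x, MulAction.mem_orbit_self x⟩
  by_cases hJ : J.Nonempty
  · by_cases htr : ∀ i ∈ J,
        MulAction.IsPretransitive (closure (σ '' ((J \ {i} : Finset ℕ) : Set ℕ))) Ω
    · by_cases hAB : ∀ i ∈ J, MulAction.IsPretransitive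
          (closure (σ '' ((J.filter (· < i) : Finset ℕ) : Set ℕ))) Ω ∨
          MulAction.IsPretransitive (closure (σ '' ((J.filter (i < ·) : Finset ℕ) : Set ℕ))) Ω
      · exact exists_removal_of_forall_isPretransitive hσ (by omega) hJ htr hAB
      · push Not at hAB
        obtain ⟨i, hi, hA, hB⟩ := hAB
        have : Nonempty Ω := ⟨x⟩
        exact exists_removal_of_not_isPretransitive hσ ih (htr i hi) hA hB
    · push Not at htr
      obtain ⟨i, -, hi⟩ := htr
      exact hsplit {i} (by simp) hi
  · rw [Finset.not_nonempty_iff_eq_empty] at hJ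
    subst hJ
    refine ⟨∅, 0, by simp; omega, ?_⟩
    apply IndepBound.of_card_lt
    simp

end Removal

section Centralizer

theorem prod_le_two_pow_sum_sub_one {P : Type*} [Fintype P] (e : P → ℕ) :
    ∏ j, e j ≤ 2 ^ ∑ j, (e j - 1) := by
  rw [← Finset.prod_pow_eq_pow_sum]
  refine Finset.prod_le_prod' fun j _ => ?_
  have := (e j - 1).lt_two_pow_self
  omega

theorem prod_lt_two_pow_sum_sub_one {P : Type*} [Fintype P] (e : P → ℕ) (he : ∀ j, 1 ≤ e j)
    {i : P} (hi : 3 ≤ e i) : ∏ j, e j < 2 ^ ∑ j, (e j - 1) := by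
  rw [← Finset.prod_pow_eq_pow_sum]
  refine Finset.prod_lt_prod (fun j _ => he j) (fun j _ => ?_) ⟨i, Finset.mem_univ i, ?_⟩
  · have := (e j - 1).lt_two_pow_self
    omega
  · obtain ⟨t, ht⟩ : ∃ t, e i = t + 3 := ⟨e i - 3, by omega⟩
    have := t.lt_two_pow_self
    rw [ht, show t + 3 - 1 = t + 2 by omega, pow_add]
    omega

variable {Γ Ω P β Q : Type*} [Group Γ] [MulAction Γ Ω] [Group Q]

theorem mul_rotation_zpow {a a' : Γ} (ha : a * a = 1) (ha' : a' * a' = 1) (i : ℤ) :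
    a * (a * a') ^ i = (a * a') ^ (-i) * a := by
  have h := conj_zpow (a := a) (b := a * a') (i := i)
  have h2 : a * (a * a') * a⁻¹ = (a * a')⁻¹ := by
    rw [mul_inv_rev, inv_eq_of_mul_eq_one_right ha, inv_eq_of_mul_eq_one_right ha', ← mul_assoc,
      ha, one_mul]
  rw [h2, inv_zpow, ← zpow_neg] at h
  rw [h, inv_mul_cancel_right]

/-- Elements of a group generated by two involutions are rotations or reflections. -/
theorem exists_zpow_of_mem_closure_pair {a a' : Γ} (ha : a * a = 1) (ha' : a' * a' = 1) {u : Γ}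
    (hu : u ∈ closure {a, a'}) : ∃ i : ℤ, u = (a * a') ^ i ∨ u = (a * a') ^ i * a := by
  have hai : a⁻¹ = a := inv_eq_of_mul_eq_one_right ha
  have hai' : a'⁻¹ = a' := inv_eq_of_mul_eq_one_right ha'
  have hflip := mul_rotation_zpow ha ha'
  have haa : a' = (a * a') ^ (-1 : ℤ) * a := by
    rw [zpow_neg_one, mul_inv_rev, hai, hai', mul_assoc, ha, mul_one]
  have hstep : ∀ y : Γ, (∃ i : ℤ, y = (a * a') ^ i ∨ y = (a * a') ^ i * a) →
      ∃ i : ℤ, a * y = (a * a') ^ i ∨ a * y = (a * a') ^ i * a := by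
    rintro y ⟨i, rfl | rfl⟩
    · exact ⟨-i, Or.inr (hflip i)⟩
    · exact ⟨-i, Or.inl (by rw [← mul_assoc, hflip, mul_assoc, ha, mul_one])⟩
  have hstep_snd : ∀ y : Γ, (∃ i : ℤ, y = (a * a') ^ i ∨ y = (a * a') ^ i * a) →
      ∃ i : ℤ, a' * y = (a * a') ^ i ∨ a' * y = (a * a') ^ i * a := by
    intro y hy
    obtain ⟨i, hi⟩ := hstep y hy
    have h : a' * y = (a * a') ^ (-1 : ℤ) * (a * y) := by rw [← mul_assoc, ← haa]
    refine ⟨-1 + i, hi.imp (fun hi => ?_) fun hi => ?_⟩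
    · rw [h, hi, ← zpow_add]
    · rw [h, hi, ← mul_assoc, ← zpow_add]
  induction hu using closure_induction_left with
  | one => exact ⟨0, Or.inl (zpow_zero _).symm⟩
  | mul_left x hx y _ ih =>
    rcases hx with rfl | rfl
    · exact hstep y ih
    · exact hstep_snd y ih
  | inv_mul_cancel x hx y _ ih =>
    rcases hx with rfl | rfl
    · rw [hai]; exact hstep y ih
    · rw [hai']; exact hstep_snd y ih

/-- If a dihedral group `⟨a, a'⟩` covers a Klein four-group of block permutations, an element
that centralizes it, preserves its orbits and generates a subgroup meeting it trivially cannot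
move the blocks like the rotation `a * a'`. -/
theorem map_ne_map_rotation [Finite Γ] [FaithfulSMul Γ Ω] {a a' : Γ} (ha : a * a = 1)
    (ha' : a' * a' = 1) {φ : Γ →* Q} (hQ : ∀ z : Q, z * z = 1) {b : Ω → β}
    (hb : ∀ (g h : Γ) (x : Ω), b (g • x) = b (h • x) ↔ φ g = φ h)
    (h1 : φ a ≠ 1) (h2 : φ a' ≠ 1) (h3 : φ a ≠ φ a') {r : Γ}
    (hcomm : ∀ u ∈ closure {a, a'}, Commute r u)
    (horb : ∀ x : Ω, ∃ u ∈ closure {a, a'}, u • x = r • x)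
    (hpow : ∀ m : ℕ, r ^ m ∈ closure {a, a'} → r ^ m = 1) : φ r ≠ φ (a * a') := by
  intro hr
  have hc1 : φ (a * a') ≠ 1 := by
    rw [map_mul]
    intro h
    exact h3 (mul_right_cancel (h.trans (hQ (φ a')).symm))
  have hceven : ∀ i : ℤ, φ ((a * a') ^ (2 * i)) = 1 := fun i => by
    rw [map_zpow, zpow_mul, zpow_two, hQ, one_zpow]
  have hcodd : ∀ i : ℤ, φ ((a * a') ^ (2 * i + 1)) = φ (a * a') := fun i => by
    rw [zpow_add_one, map_mul, hceven, one_mul]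
  obtain ⟨m, hm⟩ : 2 ∣ orderOf (a * a') := by
    have h := orderOf_eq_prime (x := φ (a * a')) (p := 2) (by rw [pow_two, hQ]) hc1
    rw [← h]
    exact orderOf_map_dvd φ (a * a')
  have hpos : 0 < orderOf (a * a') := orderOf_pos _
  have hcD : a * a' ∈ closure {a, a'} :=
    mul_mem (Subgroup.subset_closure (by simp)) (Subgroup.subset_closure (by simp))
  have hrm : r ^ m = (a * a') ^ m := by
    refine eq_of_smul_eq_smul fun x : Ω => ?_
    obtain ⟨u, hu, hux⟩ := horb x
    have hφu : φ u = φ (a * a') := ((hb u r x).1 (by rw [hux])).trans hr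
    have hrs : ∀ s : ℕ, r ^ s • x = u ^ s • x := by
      intro s
      induction s with
      | zero => simp
      | succ s ih =>
        rw [pow_succ, mul_smul, ← hux, ← mul_smul, ((hcomm u hu).pow_left s).eq, mul_smul, ih,
          ← mul_smul, pow_succ']
    obtain ⟨i, hi | hi⟩ := exists_zpow_of_mem_closure_pair ha ha' hu
    · obtain ⟨t, rfl | rfl⟩ := i.even_or_odd'
      · exact absurd (by rw [← hφu, hi, hceven]) hc1
      · have hum : u ^ m = (a * a') ^ m := by
          rw [hi, ← zpow_natCast, ← zpow_mul,
            show (2 * t + 1) * (m : ℤ) = ((2 * m : ℕ) : ℤ) * t + m by push_cast; ring,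
            zpow_add, zpow_mul, ← hm, zpow_natCast, pow_orderOf_eq_one, one_zpow, one_mul,
            zpow_natCast]
        rw [hrs, hum]
    · obtain ⟨t, rfl | rfl⟩ := i.even_or_odd'
      · rw [hi, map_mul, hceven, one_mul, map_mul] at hφu
        exact absurd (by simpa using hφu) h2
      · rw [hi, map_mul, hcodd] at hφu
        exact absurd (by simpa using hφu) h1
  have h := hpow m (hrm ▸ pow_mem hcD m)
  have := Nat.le_of_dvd (by omega) (orderOf_dvd_of_pow_eq_one (hrm ▸ h))
  omega

/-- An involution in the kernel of a map from a dihedral group `⟨a, a'⟩` onto a Klein four-group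
is central. -/
theorem commute_of_map_eq_one {a a' : Γ} (ha : a * a = 1) (ha' : a' * a' = 1) {φ : Γ →* Q}
    (hQ : ∀ z : Q, z * z = 1) (h1 : φ a ≠ 1) (h2 : φ a' ≠ 1) {u : Γ} (hu : u ∈ closure {a, a'})
    (hφu : φ u = 1) (huu : u * u = 1) : ∀ v ∈ closure {a, a'}, Commute u v := by
  obtain ⟨i, hi | hi⟩ := exists_zpow_of_mem_closure_pair ha ha' hu
  · have hua : Commute u a := by
      have h := mul_rotation_zpow ha ha' i
      rw [zpow_neg, ← hi, inv_eq_of_mul_eq_one_right huu] at h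
      exact h.symm
    have huc : Commute u (a * a') := by rw [hi]; exact (Commute.refl _).zpow_left i
    have hua' : Commute u a' := by
      have h := hua.mul_right huc
      rwa [← mul_assoc, ha, one_mul] at h
    intro v hv
    induction hv using closure_induction with
    | mem x hx =>
      rcases hx with rfl | rfl
      · exact hua
      · exact hua'
    | one => exact Commute.one_right u
    | mul x y _ _ hx hy => exact hx.mul_right hy
    | inv x _ hx => exact hx.inv_right
  · exfalso
    have hceven : ∀ i : ℤ, φ ((a * a') ^ (2 * i)) = 1 := fun i => by
      rw [map_zpow, zpow_mul, zpow_two, hQ, one_zpow]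
    obtain ⟨t, rfl | rfl⟩ := i.even_or_odd'
    · rw [hi, map_mul, hceven, one_mul] at hφu
      exact h1 hφu
    · rw [hi, map_mul, zpow_add_one, map_mul, hceven, one_mul, map_mul] at hφu
      have h := mul_right_cancel (hφu.trans (hQ (φ a)).symm)
      exact h2 (by simpa using h)

/-- A group that centralizes a dihedral group `⟨a, a'⟩` covering a Klein four-group of block
permutations, preserves the fibres of `q`, the orbits of `⟨a, a'⟩`, and meets `⟨a, a'⟩` trivially
is small in terms of the block size and the number of orbits. -/
theorem card_lt_of_centralizes [Finite Γ] [Finite Ω] [FaithfulSMul Γ Ω] [Fintype P] {a a' : Γ}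
    (ha : a * a = 1) (ha' : a' * a' = 1) {φ : Γ →* Q} (hQ : ∀ z : Q, z * z = 1)
    (hQ4 : Nat.card Q = 4) {b : Ω → β}
    (hb : ∀ (g h : Γ) (x : Ω), b (g • x) = b (h • x) ↔ φ g = φ h)
    (hab : ∀ x y : Ω, ∃ u ∈ closure {a, a'}, b (u • x) = b y)
    (h1 : φ a ≠ 1) (h2 : φ a' ≠ 1) (h3 : φ a ≠ φ a') {q : Ω → P} (hqs : Function.Surjective q)
    (hq : ∀ x y : Ω, q x = q y ↔ ∃ u ∈ closure {a, a'}, u • x = y) {N : Subgroup Γ}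
    (hN : ∀ h ∈ N, ∀ u ∈ closure {a, a'}, Commute h u) (hNq : ∀ h ∈ N, ∀ x, q (h • x) = q x)
    (hND : N ⊓ closure {a, a'} = ⊥) (x₀ : Ω) :
    Fintype.card P ≤ {x | b x = b x₀}.ncard ∧
      Nat.card N < 2 ^ ({x | b x = b x₀}.ncard - Fintype.card P + 1) := by
  classical
  set D : Subgroup Γ := closure {a, a'} with hD
  set F : P → Set Ω := fun j => {x | b x = b x₀ ∧ q x = j} with hF
  have hFne : ∀ j, ∃ x, b x = b x₀ ∧ q x = j := by
    intro j
    obtain ⟨y, rfl⟩ := hqs j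
    obtain ⟨u, hu, hux⟩ := hab y x₀
    exact ⟨u • y, hux, ((hq y _).2 ⟨u, hu, rfl⟩).symm⟩
  have hF1 : ∀ j, 1 ≤ (F j).ncard := fun j => (Set.ncard_pos).2 (hFne j)
  have hsum : {x | b x = b x₀}.ncard = ∑ j, (F j).ncard := by
    rw [← Nat.card_coe_set_eq, ← Nat.card_congr (Equiv.sigmaFiberEquiv
      (fun x : {x | b x = b x₀} => q x)), Nat.card_sigma]
    refine Finset.sum_congr rfl fun j _ => ?_
    rw [← Nat.card_coe_set_eq]
    exact Nat.card_congr (Equiv.subtypeSubtypeEquivSubtypeInter (fun x => b x = b x₀)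
      (fun x => q x = j))
  have hsub : ∑ j, ((F j).ncard - 1) = {x | b x = b x₀}.ncard - Fintype.card P := by
    rw [hsum, Finset.sum_tsub_distrib _ fun j _ => hF1 j]
    simp
  have hle : Fintype.card P ≤ {x | b x = b x₀}.ncard := by
    rw [hsum, Fintype.card_eq_sum_ones]
    exact Finset.sum_le_sum fun j _ => hF1 j
  refine ⟨hle, ?_⟩
  rw [← hsub]
  have hb1 : ∀ (g : Γ) (x : Ω), b (g • x) = b x ↔ φ g = 1 := fun g x => by
    have := hb g 1 x
    rwa [one_smul, map_one] at this
  have hqD : ∀ u ∈ D, ∀ x, q (u • x) = q x := fun u hu x => ((hq x _).2 ⟨u, hu, rfl⟩).symm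
  have hfix : ∀ w : Γ, (∀ v ∈ D, ∀ z, b z = b x₀ → (v⁻¹ * w * v) • z = z) → w = 1 := by
    intro w hw
    refine eq_of_smul_eq_smul fun y : Ω => ?_
    obtain ⟨v, hv, hvy⟩ := hab y x₀
    have h := hw v⁻¹ (inv_mem hv) (v • y) hvy
    rw [inv_inv, ← mul_smul, inv_mul_cancel_right, mul_smul] at h
    rw [smul_left_cancel v h, one_smul]
  -- passing to block-preserving elements loses a factor of at most two
  have hN2 : Nat.card N ≤ 2 * Nat.card (N ⊓ φ.ker : Subgroup Γ) := by
    have hlt : N.map φ < ⊤ := by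
      refine lt_top_iff_ne_top.2 fun htop => ?_
      obtain ⟨r, hr, hrc⟩ := (htop ▸ mem_top (φ (a * a')) : φ (a * a') ∈ N.map φ)
      refine map_ne_map_rotation ha ha' hQ hb h1 h2 h3 (hN r hr) (fun x => ?_) (fun m hm => ?_) hrc
      · exact (hq x _).1 (hNq r hr x).symm
      · exact mem_bot.1 (hND ▸ ⟨pow_mem hr m, hm⟩)
    have := Nat.finite_of_card_ne_zero (hQ4 ▸ by norm_num : Nat.card Q ≠ 0)
    have h4 := two_mul_card_le_of_lt hlt
    rw [card_top, hQ4] at h4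
    have hidx := (φ.comp N.subtype).ker.card_mul_index
    rw [index_ker, MonoidHom.range_comp, range_subtype] at hidx
    have hker : Nat.card (φ.comp N.subtype).ker ≤ Nat.card (N ⊓ φ.ker : Subgroup Γ) :=
      Nat.card_le_card_of_injective (fun x => ⟨x.1.1, x.1.2, x.2⟩) fun x y hxy =>
        Subtype.ext (Subtype.ext (Subtype.mk.inj hxy))
    nlinarith
  obtain ⟨M, hM⟩ : ∃ M : Subgroup Γ, ∀ h, h ∈ M ↔
      φ h = 1 ∧ (∀ u ∈ D, Commute h u) ∧ ∀ x, q (h • x) = q x := by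
    refine ⟨{ carrier := {h | φ h = 1 ∧ (∀ u ∈ D, Commute h u) ∧ ∀ x, q (h • x) = q x},
              one_mem' := ?_, mul_mem' := ?_, inv_mem' := ?_ }, fun h => Iff.rfl⟩
    · rintro g h ⟨hg1, hg2, hg3⟩ ⟨hh1, hh2, hh3⟩
      exact ⟨by rw [map_mul, hg1, hh1, one_mul], fun u hu => (hg2 u hu).mul_left (hh2 u hu),
        fun x => by rw [mul_smul, hg3, hh3]⟩
    · exact ⟨map_one φ, fun u _ => Commute.one_left u, fun x => by rw [one_smul]⟩
    · rintro g ⟨hg1, hg2, hg3⟩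
      exact ⟨by rw [map_inv, hg1, inv_one], fun u hu => (hg2 u hu).inv_left,
        fun x => by rw [← hg3, smul_inv_smul]⟩
  have hMcard : Nat.card M ≤ ∏ j, (F j).ncard := by
    choose s hsb hsq using hFne
    simp_rw [← Nat.card_coe_set_eq]
    rw [← Nat.card_pi]
    refine Nat.card_le_card_of_injective (fun h j => ⟨h.1 • s j, ?_, ?_⟩) fun g h hgh => ?_
    · rw [(hb1 h.1 (s j)).2 ((hM _).1 h.2).1, hsb]
    · rw [((hM _).1 h.2).2.2, hsq]
    · refine Subtype.ext (eq_of_smul_eq_smul fun y : Ω => ?_)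
      obtain ⟨u, hu, hux⟩ := (hq (s (q y)) y).1 (hsq _)
      have h1 : g.1 • s (q y) = h.1 • s (q y) := congrArg Subtype.val (congrFun hgh (q y))
      rw [← hux, ← mul_smul, ← mul_smul, (((hM _).1 g.2).2.1 u hu).eq,
        (((hM _).1 h.2).2.1 u hu).eq, mul_smul, mul_smul, h1]
  have hNM : N ⊓ φ.ker ≤ M := fun h hh => (hM h).2 ⟨hh.2, hN h hh.1, hNq h hh.1⟩
  have hNMcard := card_le_of_le hNM
  have hMle := prod_le_two_pow_sum_sub_one fun j => (F j).ncard
  rw [pow_succ]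
  by_cases he3 : ∃ j, 3 ≤ (F j).ncard
  · obtain ⟨j, hj⟩ := he3
    have := prod_lt_two_pow_sum_sub_one (fun j => (F j).ncard) hF1 hj
    omega
  push Not at he3
  have hmem : ∀ w ∈ D, φ w = 1 → ∀ z, b z = b x₀ → w • z ∈ F (q z) := fun w hw hφ z hz =>
    ⟨((hb1 w z).2 hφ).trans hz, hqD w hw z⟩
  have hconj : ∀ v ∈ D, ∀ w ∈ D, φ w = 1 → v⁻¹ * w * v ∈ D ∧ φ (v⁻¹ * w * v) = 1 :=
    fun v hv w hw hφ => ⟨mul_mem (mul_mem (inv_mem hv) hw) hv, by simp [hφ]⟩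
  by_cases he2 : ∃ j, 1 < (F j).ncard
  · obtain ⟨j, hj⟩ := he2
    obtain ⟨x, y, ⟨hxb, hxq⟩, ⟨hyb, hyq⟩, hxy⟩ := (Set.one_lt_ncard_iff (Set.toFinite _)).1 hj
    obtain ⟨u, hu, hux⟩ := (hq x y).1 (hxq.trans hyq.symm)
    have hφu : φ u = 1 := (hb1 u x).1 (by rw [hux, hxb, hyb])
    have huu : u * u = 1 := by
      refine hfix _ fun v hv z hz => ?_
      obtain ⟨hw, hφw⟩ := hconj v hv u hu hφu
      rw [show v⁻¹ * (u * u) * v = (v⁻¹ * u * v) * (v⁻¹ * u * v) by group]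
      generalize v⁻¹ * u * v = w at hw hφw
      by_contra hne
      have hwz : w • z ≠ z := fun h => hne (by rw [mul_smul, h, h])
      have : 2 < (F (q z)).ncard := (Set.two_lt_ncard_iff (Set.toFinite _)).2
        ⟨z, w • z, (w * w) • z, ⟨hz, rfl⟩, hmem w hw hφw z hz,
        hmem _ (mul_mem hw hw) (by rw [map_mul, hφw, one_mul]) z hz, hwz.symm, Ne.symm hne,
        fun h => hwz (by rw [mul_smul] at h; exact (smul_left_cancel w h).symm)⟩
      exact absurd (he3 (q z)) (by omega)
    have huM : u ∈ M :=
      (hM u).2 ⟨hφu, commute_of_map_eq_one ha ha' hQ h1 h2 hu hφu huu, hqD u hu⟩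
    have huN : u ∉ N ⊓ φ.ker := fun h => by
      have : u = 1 := mem_bot.1 (hND ▸ ⟨h.1, hu⟩)
      rw [this, one_smul] at hux
      exact hxy hux
    have := two_mul_card_le_of_lt (lt_of_le_of_ne hNM fun h => huN (h ▸ huM))
    have : 0 < 2 ^ ∑ j, ((F j).ncard - 1) := by positivity
    omega
  · push Not at he2
    have htriv : ∀ w ∈ D, φ w = 1 → w = 1 := by
      intro w hw hφw
      refine hfix w fun v hv z hz => ?_
      obtain ⟨hw', hφw'⟩ := hconj v hv w hw hφw
      by_contra hne
      have : 1 < (F (q z)).ncard := (Set.one_lt_ncard_iff (Set.toFinite _)).2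
        ⟨_, _, hmem _ hw' hφw' z hz, ⟨hz, rfl⟩, hne⟩
      exact absurd (he2 (q z)) (by omega)
    have hNbot : N = ⊥ := by
      refine (eq_bot_iff_forall _).2 fun h hh => ?_
      obtain ⟨u, hu, hux⟩ := (hq x₀ _).1 (hNq h hh x₀).symm
      have hφ : φ u = φ h := (hb u h x₀).1 (by rw [hux])
      have hhu : h = u := by
        refine eq_of_smul_eq_smul fun y : Ω => ?_
        obtain ⟨v, hv, hvy⟩ := (hq y _).1 (hNq h hh y).symm
        have hφv : φ v = φ h := (hb v h y).1 (by rw [hvy])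
        have := htriv (u⁻¹ * v) (mul_mem (inv_mem hu) hv) (by rw [map_mul, map_inv, hφ, hφv,
          inv_mul_cancel])
        rw [← hvy, inv_mul_eq_one.1 this]
      exact mem_bot.1 (hND ▸ ⟨hh, hhu ▸ hu⟩)
    have : 0 < 2 ^ ∑ j, ((F j).ncard - 1) := by positivity
    rw [hNbot, card_bot]
    omega

end Centralizer

section Bound

theorem IndepBound.card_le {G : Type*} [Group G] {d : ℕ} {S : Finset ℕ} {y : ℕ → G}
    (h : IndepBound (closure (y '' (S : Set ℕ))) d)
    (hy : ∀ i ∈ S, y i ∉ closure (y '' ((S : Set ℕ) \ {i}))) : S.card ≤ d := by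
  classical
  have hmem : ∀ i ∈ S, y i ∈ closure (y '' (S : Set ℕ)) := fun i hi =>
    Subgroup.subset_closure ⟨i, hi, rfl⟩
  set z : ℕ → closure (y '' (S : Set ℕ)) := fun i =>
    if hi : i ∈ S then ⟨y i, hmem i hi⟩ else 1 with hz
  have hzy : ∀ i ∈ S, (z i : G) = y i := fun i hi => by simp [hz, hi]
  refine h S z fun i hi hmem => hy i hi ?_
  have := mem_map_of_mem (Subgroup.subtype _) hmem
  rw [MonoidHom.map_closure, Set.image_image] at this
  rw [← hzy i hi]
  refine Subgroup.closure_mono ?_ this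
  rintro _ ⟨j, hj, rfl⟩
  exact ⟨j, hj, (hzy j hj.1).symm⟩

variable {Γ Ω β Q : Type*} [Group Γ] [MulAction Γ Ω] [Group Q]

/-- The centralizer of a subgroup permutes the orbits of that subgroup. -/
theorem exists_centralizer_hom (D : Subgroup Γ) :
    ∃ ψ : centralizer (D : Set Γ) →* Equiv.Perm (MulAction.orbitRel.Quotient D Ω),
      ∀ (g : centralizer (D : Set Γ)) (x : Ω), ψ g (Quotient.mk'' x) = Quotient.mk'' (g.1 • x) := by
  let f : centralizer (D : Set Γ) →* Function.End (MulAction.orbitRel.Quotient D Ω) :=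
    { toFun := fun g => Quotient.map' (fun x => g.1 • x) (by
        rintro x y ⟨u, rfl⟩
        refine ⟨u, ?_⟩
        change u.1 • g.1 • y = g.1 • u.1 • y
        rw [← mul_smul, ← mul_smul, mem_centralizer_iff.1 g.2 u.1 u.2])
      map_one' := by
        funext x
        induction x using Quotient.inductionOn' with | _ x =>
        exact congrArg Quotient.mk'' (one_smul Γ x)
      map_mul' := fun g h => by
        funext x
        induction x using Quotient.inductionOn' with | _ x =>
        exact congrArg Quotient.mk'' (mul_smul g.1 h.1 x) }
  exact ⟨f.toHomPerm, fun g x => rfl⟩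

/-- An independent string family centralizing a dihedral group that covers a Klein four-group of
block permutations has fewer members than the blocks have points. -/
theorem card_lt_ncard_block [Finite Γ] [Finite Ω] [FaithfulSMul Γ Ω] {a a' : Γ}
    (ha : a * a = 1) (ha' : a' * a' = 1) {φ : Γ →* Q} (hQ : ∀ z : Q, z * z = 1)
    (hQ4 : Nat.card Q = 4) {b : Ω → β}
    (hb : ∀ (g h : Γ) (x : Ω), b (g • x) = b (h • x) ↔ φ g = φ h)
    (hab : ∀ x y : Ω, ∃ u ∈ closure {a, a'}, b (u • x) = b y)
    (h1 : φ a ≠ 1) (h2 : φ a' ≠ 1) (h3 : φ a ≠ φ a') {x : ℕ → Γ} {S : Finset ℕ}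
    (hx : ∀ i ∈ S, ∀ u ∈ closure {a, a'}, Commute (x i) u)
    (hstr : ∀ i ∈ S, ∀ j ∈ S, i + 1 < j → Commute (x i) (x j))
    (hind : ∀ i ∈ S, x i ∉ closure (x '' ((S : Set ℕ) \ {i})))
    (hint : closure (x '' (S : Set ℕ)) ⊓ closure {a, a'} = ⊥) (x₀ : Ω) :
    S.card < {x | b x = b x₀}.ncard := by
  classical
  set D : Subgroup Γ := closure {a, a'} with hD
  set Z := centralizer (D : Set Γ) with hZ
  obtain ⟨ψ, hψ⟩ := exists_centralizer_hom (Ω := Ω) D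
  have : Fintype (MulAction.orbitRel.Quotient D Ω) :=
    @Fintype.ofFinite _ (Quotient.finite _)
  have : Nonempty (MulAction.orbitRel.Quotient D Ω) := ⟨Quotient.mk'' x₀⟩
  have hxZ : ∀ i ∈ S, x i ∈ Z := fun i hi => mem_centralizer_iff.2 fun u hu => (hx i hi u hu).symm
  set y : ℕ → Z := fun i => if hi : i ∈ S then ⟨x i, hxZ i hi⟩ else 1 with hy
  have hyx : ∀ i ∈ S, (y i : Γ) = x i := fun i hi => by simp [hy, hi]
  have hystr : ∀ i ∈ S, ∀ j ∈ S, i + 1 < j → Commute (ψ (y i)) (ψ (y j)) := by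
    intro i hi j hj hij
    refine Commute.map (Subtype.ext ?_) ψ
    change (y i : Γ) * y j = y j * y i
    rw [hyx i hi, hyx j hj]
    exact hstr i hi j hj hij
  have hymap : ∀ T ⊆ (S : Set ℕ), (closure (y '' T)).map Z.subtype = closure (x '' T) := by
    intro T hT
    rw [MonoidHom.map_closure, Set.image_image]
    congr 1
    exact Set.image_congr fun i hi => hyx i (hT hi)
  obtain ⟨R, d, hRd, hbound⟩ := exists_removal (fun i => ψ (y i)) S hystr
  set H : Subgroup Z := closure (y '' ((S \ R : Finset ℕ) : Set ℕ)) with hH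
  have hSR : ((S \ R : Finset ℕ) : Set ℕ) ⊆ S := Finset.coe_subset.2 Finset.sdiff_subset
  have hHmap : H.map ψ = closure ((fun i => ψ (y i)) '' ((S \ R : Finset ℕ) : Set ℕ)) := by
    rw [hH, MonoidHom.map_closure, Set.image_image]
  rw [← hHmap] at hbound
  have hinj : Function.Injective (Z.subtype.comp H.subtype) :=
    Z.subtype_injective.comp H.subtype_injective
  set N : Subgroup Γ := (ψ.subgroupMap H).ker.map (Z.subtype.comp H.subtype) with hNdef
  have hNH : ∀ h ∈ N, ∃ hZ : h ∈ Z, (⟨h, hZ⟩ : Z) ∈ H ∧ ψ ⟨h, hZ⟩ = 1 := by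
    rintro _ ⟨g, hg, rfl⟩
    exact ⟨g.1.2, g.2, congrArg Subtype.val (MonoidHom.mem_ker.1 hg)⟩
  have hN := card_lt_of_centralizes ha ha' hQ hQ4 hb hab h1 h2 h3
    (P := MulAction.orbitRel.Quotient D Ω) (q := Quotient.mk'') Quotient.mk''_surjective
    (fun x y => by
      rw [eq_comm, Quotient.eq'']
      exact ⟨fun ⟨u, hu⟩ => ⟨u.1, u.2, hu⟩, fun ⟨u, hu, h⟩ => ⟨⟨u, hu⟩, h⟩⟩)
    (N := N) (fun h hh u hu => by
      obtain ⟨hZ, -, -⟩ := hNH h hh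
      exact (mem_centralizer_iff.1 hZ u hu).symm)
    (fun h hh x => by
      obtain ⟨hZ, -, h1⟩ := hNH h hh
      rw [← hψ ⟨h, hZ⟩ x, h1, Equiv.Perm.one_apply])
    (by
      refine (eq_bot_iff_forall _).2 fun h hh => ?_
      obtain ⟨hZ, hH', -⟩ := hNH h hh.1
      have := mem_map_of_mem Z.subtype hH'
      rw [hymap _ hSR] at this
      exact mem_bot.1 (hint ▸ ⟨Subgroup.closure_mono (Set.image_mono hSR) this, hh.2⟩)) x₀
  have hcardN : Nat.card N = Nat.card (ψ.subgroupMap H).ker :=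
    (Nat.card_congr ((ψ.subgroupMap H).ker.equivMapOfInjective _ hinj).toEquiv).symm
  rw [hcardN] at hN
  have hHb := IndepBound.of_ker (ψ.subgroupMap H) hbound (IndepBound.of_card_lt hN.2)
  have hcard := hHb.card_le fun i hi hmem => by
    refine notMem_closure_of_subset Finset.sdiff_subset hind i hi ?_
    have h := mem_map_of_mem Z.subtype hmem
    rw [hymap _ (Set.sdiff_subset.trans hSR)] at h
    rwa [← hyx i (hSR hi)]
  have := Finset.le_card_sdiff R S
  omega

end Bound

section Klein

variable {G : Type*} [Group G]

/-- Two distinct involutions generate a Klein four-group containing them. -/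
theorem closure_pair_eq_of_card_eq_four [Finite G] {V : Subgroup G} (hV : Nat.card V = 4)
    (hsq : ∀ g ∈ V, g ^ 2 = 1) {p q : G} (hp : p ∈ V) (hq : q ∈ V) (hp1 : p ≠ 1) (hq1 : q ≠ 1)
    (hpq : p ≠ q) : closure {p, q} = V := by
  have hle : closure {p, q} ≤ V := (closure_le V).2 (by rintro _ (rfl | rfl) <;> assumption)
  have hlt : zpowers p < closure {p, q} := by
    refine lt_of_le_of_ne (zpowers_le.2 (Subgroup.subset_closure (by simp))) fun h => ?_
    obtain ⟨i, hi⟩ : q ∈ zpowers p := h ▸ Subgroup.subset_closure (by simp)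
    change p ^ i = q at hi
    have hev : ∀ t : ℤ, p ^ (2 * t) = 1 := fun t => by
      rw [zpow_mul, zpow_ofNat, hsq p hp, one_zpow]
    obtain ⟨t, rfl | rfl⟩ := i.even_or_odd'
    · exact hq1 (by rw [← hi, hev])
    · exact hpq (by rw [← hi, zpow_add_one, hev, one_mul])
  have h := two_mul_card_le_of_lt hlt
  rw [Nat.card_zpowers, orderOf_eq_prime (hsq p hp) hp1] at h
  exact eq_of_le_of_card_ge hle (by omega)

/-- An independent generating family of a Klein four-group has exactly two members. -/
theorem exists_pair_of_independent [Finite G] {ι : Type*} {V : Subgroup G} (hV : Nat.card V = 4)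
    (hsq : ∀ g ∈ V, g ^ 2 = 1) {π : ι → G} {L : Set ι} (hLgen : closure (π '' L) = V)
    (hLind : ∀ l ∈ L, π l ∉ closure (π '' (L \ {l}))) :
    ∃ i j, L = {i, j} ∧ π i ≠ 1 ∧ π j ≠ 1 ∧ π i ≠ π j := by
  have hmem : ∀ l ∈ L, π l ∈ V := fun l hl => hLgen ▸ Subgroup.subset_closure ⟨l, hl, rfl⟩
  have hne : ∀ l ∈ L, π l ≠ 1 := fun l hl h => hLind l hl (h ▸ one_mem _)
  have hinj : ∀ l ∈ L, ∀ l' ∈ L, l ≠ l' → π l ≠ π l' := fun l hl l' hl' hll h =>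
    hLind l hl (h ▸ Subgroup.subset_closure ⟨l', ⟨hl', Ne.symm hll⟩, rfl⟩)
  obtain ⟨i, hi⟩ : L.Nonempty := by
    rw [Set.nonempty_iff_ne_empty]
    rintro rfl
    rw [Set.image_empty, Subgroup.closure_empty] at hLgen
    rw [← hLgen, card_bot] at hV
    omega
  obtain ⟨j, hj, hij⟩ : ∃ j ∈ L, i ≠ j := by
    by_contra! h
    have hL : L = {i} := Set.eq_singleton_iff_unique_mem.2 ⟨hi, fun j hj => (h j hj).symm⟩
    rw [hL, Set.image_singleton, ← zpowers_eq_closure] at hLgen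
    rw [← hLgen, Nat.card_zpowers, orderOf_eq_prime (hsq _ (hmem i hi)) (hne i hi)] at hV
    omega
  refine ⟨i, j, subset_antisymm (fun l hl => ?_) ?_, hne i hi, hne j hj, hinj i hi j hj hij⟩
  · by_contra hl'
    simp only [Set.mem_insert_iff, Set.mem_singleton_iff, not_or] at hl'
    refine hLind l hl (Subgroup.closure_mono ?_
      (closure_pair_eq_of_card_eq_four hV hsq (hmem i hi) (hmem j hj) (hne i hi) (hne j hj)
        (hinj i hi j hj hij) ▸ hmem l hl))
    rintro _ (rfl | rfl)
    · exact ⟨i, ⟨hi, Ne.symm hl'.1⟩, rfl⟩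
    · exact ⟨j, ⟨hj, Ne.symm hl'.2⟩, rfl⟩
  · rintro _ (rfl | rfl) <;> assumption

/-- Permutations that are compatible with a surjection onto a set of blocks act on the blocks. -/
theorem exists_blockHom {ι Ω β : Type*} {ρ : ι → Equiv.Perm Ω} {b : Ω → β}
    (hb : Function.Surjective b) {π : ι → Equiv.Perm β} (hπ : ∀ l x, b (ρ l x) = π l (b x)) :
    ∃ φ : closure (Set.range ρ) →* closure (Set.range π),
      ∀ (g : closure (Set.range ρ)) (x : Ω), b (g • x) = φ g • b x := by
  have hex : ∀ g : closure (Set.range ρ), ∃ v : closure (Set.range π),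
      ∀ x, b (g • x) = v • b x := by
    rintro ⟨g, hg⟩
    induction hg using closure_induction with
    | mem g hg =>
      obtain ⟨l, rfl⟩ := hg
      exact ⟨⟨π l, Subgroup.subset_closure ⟨l, rfl⟩⟩, hπ l⟩
    | one => exact ⟨1, fun x => by rw [one_smul]; rfl⟩
    | mul g h hg hh ihg ihh =>
      obtain ⟨v, hv⟩ := ihg
      obtain ⟨w, hw⟩ := ihh
      refine ⟨v * w, fun x => ?_⟩
      rw [mul_smul, ← hw, ← hv]
      rfl
    | inv g hg ihg =>
      obtain ⟨v, hv⟩ := ihg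
      refine ⟨v⁻¹, fun x => ?_⟩
      rw [eq_inv_smul_iff, ← hv]
      exact congrArg b (g.apply_symm_apply x)
  choose φ hφ using hex
  refine ⟨MonoidHom.mk' φ fun g h => ?_, hφ⟩
  refine eq_of_smul_eq_smul fun y : β => ?_
  obtain ⟨x, rfl⟩ := hb y
  rw [← hφ, mul_smul, hφ, hφ, mul_smul]

end Klein

theorem stmt10 {n r : ℕ} (hn : n = n / 4 * 4) (hk : 2 ≤ n / 4)
    (ρ : Fin r → Equiv.Perm (Fin n)) (hstring : IsStringC ρ)
    (htrans : MulAction.IsPretransitive ↥(Subgroup.closure (Set.range ρ)) (Fin n))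
    -- the block map b : m = 4 blocks of size k = n/4
    (b : Fin n → Fin 4) (hbsurj : Function.Surjective b)
    (hfib : ∀ c : Fin 4, Set.ncard {x | b x = c} = n / 4)
    (hcompat : ∀ g ∈ Subgroup.closure (Set.range ρ), ∀ x y : Fin n,
      b x = b y → b (g x) = b (g y))
    -- π l is the induced block permutation φ (ρ l)
    (π : Fin r → Equiv.Perm (Fin 4))
    (hπ : ∀ (l : Fin r) (x : Fin n), b (ρ l x) = π l (b x))
    -- L generates the image of φ independently
    (L : Set (Fin r))
    (hLgen : Subgroup.closure (π '' L) = Subgroup.closure (Set.range π))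
    (hLind : ∀ l ∈ L, π l ∉ Subgroup.closure (π '' (L \ {l})))
    -- the block action is isomorphic to the Klein four group
    (hcard : Nat.card ↥(Subgroup.closure (Set.range π)) = 4)
    (hsq : ∀ g ∈ Subgroup.closure (Set.range π), g ^ 2 = 1) :
    {i : Fin r | i ∉ L ∧ ∀ l ∈ L, Commute (ρ i) (ρ l)}.ncard ≤ n / 4 - 1 := by
  classical
  obtain ⟨l₁, l₂, rfl, h1, h2, h12⟩ := exists_pair_of_independent hcard hsq hLgen hLind
  set C : Set (Fin r) := {i | i ∉ ({l₁, l₂} : Set (Fin r)) ∧ ∀ l ∈ ({l₁, l₂} : Set (Fin r)),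
    Commute (ρ i) (ρ l)} with hC
  obtain ⟨⟨hord, hcomm⟩, hinter⟩ := hstring
  set G := closure (Set.range ρ) with hG
  set V := closure (Set.range π) with hV
  obtain ⟨φ, hφ⟩ : ∃ φ : G →* V, ∀ (g : G) (x : Fin n), b (g • x) = φ g • b x :=
    exists_blockHom hbsurj hπ
  have hmul : ∀ i, ρ i * ρ i = 1 := fun i => by rw [← pow_two, ← hord i, pow_orderOf_eq_one]
  have hρG : ∀ i, ρ i ∈ G := fun i => Subgroup.subset_closure ⟨i, rfl⟩
  have hφρ : ∀ i, (φ ⟨ρ i, hρG i⟩ : Equiv.Perm (Fin 4)) = π i := by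
    intro i
    ext1 y
    obtain ⟨x, rfl⟩ := hbsurj y
    exact (hφ ⟨ρ i, hρG i⟩ x).symm.trans (hπ i x)
  have hreg : ∀ y : Fin 4, Function.Injective fun v : V => v • y := by
    intro y
    refine ((Nat.bijective_iff_surjective_and_card _).2 ⟨fun z => ?_, by rw [hcard, Nat.card_fin]⟩).1
    obtain ⟨x, rfl⟩ := hbsurj y
    obtain ⟨x', rfl⟩ := hbsurj z
    obtain ⟨g, rfl⟩ := htrans.exists_smul_eq x x'
    exact ⟨φ g, (hφ g x).symm⟩
  set x : ℕ → G := fun i => if h : i < r then ⟨ρ ⟨i, h⟩, hρG _⟩ else 1 with hx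
  have hxρ : ∀ i : Fin r, (x i : Equiv.Perm (Fin n)) = ρ i := fun i => by simp [hx]
  have hmap : ∀ J : Set (Fin r),
      (closure (x '' (Fin.val '' J))).map G.subtype = closure (ρ '' J) := by
    intro J
    rw [MonoidHom.map_closure, Set.image_image, Set.image_image]
    congr 1
    exact Set.image_congr fun i _ => hxρ i
  set S : Finset ℕ := C.toFinset.map Fin.valEmbedding with hS
  have hSC : (S : Set ℕ) = Fin.val '' C := by simp [hS]
  have hScard : S.card = C.ncard := by rw [hS, Finset.card_map, Set.ncard_eq_toFinset_card']
  have hSmem : ∀ i ∈ S, ∃ j ∈ C, j.val = i := fun i hi => by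
    have : i ∈ (S : Set ℕ) := hi
    rwa [hSC] at this
  have hxc : ∀ i ∈ C, ∀ l ∈ ({l₁, l₂} : Set (Fin r)), Commute (x i) (x l) := fun i hi l hl =>
    Subtype.ext (by simpa [hxρ] using (hi.2 l hl).eq)
  have hD : closure {x l₁, x l₂} = closure (x '' (Fin.val '' {l₁, l₂})) := by
    rw [Set.image_pair, Set.image_pair]
  have hxmul : ∀ i : Fin r, x i * x i = 1 := fun i => Subtype.ext (by simpa [hxρ] using hmul i)
  have hxπ : ∀ i : Fin r, (φ (x i) : Equiv.Perm (Fin 4)) = π i := fun i => by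
    rw [← hφρ i]
    congr 2
    exact Subtype.ext (hxρ i)
  have hn0 : 0 < n := by omega
  have hlt := card_lt_ncard_block (a := x l₁) (a' := x l₂) (φ := φ) (b := b) (x := x) (S := S)
    (hxmul l₁) (hxmul l₂) (fun v => Subtype.ext (by rw [← pow_two]; exact hsq v v.2)) hcard
    (fun g h y => by rw [hφ, hφ, (hreg (b y)).eq_iff])
    (fun y z => by
      obtain ⟨g, rfl⟩ := htrans.exists_smul_eq y z
      have hg : V.subtype.comp φ g ∈ (closure {x l₁, x l₂}).map (V.subtype.comp φ) := by
        rw [MonoidHom.map_closure, Set.image_pair]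
        change (φ g : Equiv.Perm (Fin 4)) ∈ closure {(φ (x l₁) : Equiv.Perm (Fin 4)),
          (φ (x l₂) : Equiv.Perm (Fin 4))}
        rw [hxπ, hxπ, ← Set.image_pair, hLgen]
        exact (φ g).2
      obtain ⟨u, hu, hug⟩ := hg
      exact ⟨u, hu, by rw [hφ, hφ, Subtype.ext hug]⟩)
    (fun h => h1 (by rw [← hxπ, h]; rfl)) (fun h => h2 (by rw [← hxπ, h]; rfl))
    (fun h => h12 (by rw [← hxπ, h, hxπ]))
    (fun i hi u hu => by
      obtain ⟨j, hj, rfl⟩ := hSmem i hi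
      have hle : closure {x l₁, x l₂} ≤ centralizer {x j} := by
        rw [closure_le]
        rintro _ (rfl | rfl)
        · exact mem_centralizer_singleton_iff.2 (hxc j hj l₁ (by simp)).symm
        · exact mem_centralizer_singleton_iff.2 (hxc j hj l₂ (by simp)).symm
      exact (mem_centralizer_singleton_iff.1 (hle hu)).symm)
    (fun i hi j hj hij => by
      obtain ⟨i, -, rfl⟩ := hSmem i hi
      obtain ⟨j, -, rfl⟩ := hSmem j hj
      have h := hcomm i j (by rw [lt_abs]; right; omega)
      refine Subtype.ext ?_
      change (x i : Equiv.Perm (Fin n)) * x j = x j * x i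
      rw [hxρ, hxρ]
      rw [pow_two] at h
      rw [eq_inv_of_mul_eq_one_left h, mul_inv_rev, inv_eq_of_mul_eq_one_right (hmul i),
        inv_eq_of_mul_eq_one_right (hmul j)])
    (fun i hi hmem => by
      obtain ⟨j, hj, rfl⟩ := hSmem i hi
      rw [hSC, ← Set.image_singleton, ← Set.image_sdiff Fin.val_injective] at hmem
      have h := mem_map_of_mem G.subtype hmem
      rw [hmap] at h
      have h' : ρ j ∈ closure (ρ '' (C \ {j})) ⊓ closure (ρ '' {j}) :=
        ⟨hxρ j ▸ h, Subgroup.subset_closure ⟨j, rfl, rfl⟩⟩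
      rw [hinter, Set.sdiff_inter_self, Set.image_empty, Subgroup.closure_empty, mem_bot] at h'
      have := hord j
      rw [h', orderOf_one] at this
      omega)
    (by
      refine (eq_bot_iff_forall _).2 fun g hg => ?_
      rw [hSC, hD] at hg
      have h : (g : Equiv.Perm (Fin n)) ∈ closure (ρ '' C) ⊓ closure (ρ '' {l₁, l₂}) :=
        ⟨hmap C ▸ mem_map_of_mem G.subtype hg.1, hmap {l₁, l₂} ▸ mem_map_of_mem G.subtype hg.2⟩
      have hCL : C ∩ {l₁, l₂} = ∅ := Set.eq_empty_of_forall_notMem fun i hi => hi.1.1 hi.2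
      rw [hinter, hCL, Set.image_empty, Subgroup.closure_empty, mem_bot] at h
      exact Subtype.ext h)
    (⟨0, hn0⟩ : Fin n)
  rw [hfib] at hlt
  omega
end
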